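/- Finiteness of the set of minimizers at non-conjugate points: let x ∈ Ω, assume A_x admits at least one minimizer, and assume that for every minimizer φ of A_x the motion γ(t) = a t + φ(t) + x − a takes values in Ω and the bilinear form d²A_x(φ) is invertible. Then the set of minimizers of A_x on D_0^{1,2}(1,+∞) is finite. -/

import Mathlib

open MeasureTheory Real Set Filter Topology
open scoped RealInnerProductSpace ENNReal

noncomputable section
namespace NBodyHJ

attribute [local instance] Classical.propDecidable

abbrev Conf (d N : ℕ) := Fin N → EuclideanSpace ℝ (Fin d)

variable {d N : ℕ}

/-- The mass inner product on the configuration space. -/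
def minner (m : Fin N → ℝ) (x y : Conf d N) : ℝ := ∑ i, m i * ⟪x i, y i⟫

/-- The mass norm on the configuration space. -/
def mnorm (m : Fin N → ℝ) (x : Conf d N) : ℝ := Real.sqrt (minner m x x)

/-- Membership in the zero-barycenter configuration space `X`. -/
def inX (m : Fin N → ℝ) (x : Conf d N) : Prop := ∑ i, m i • x i = 0

/-- Collision configurations. -/
def collision (x : Conf d N) : Prop := ∃ i j, i ≠ j ∧ x i = x j

/-- Membership in the collision-free zero-barycenter space `Ω`. -/
def inOmega (m : Fin N → ℝ) (x : Conf d N) : Prop := inX m x ∧ ¬ collision x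

/-- The Newtonian potential (with junk value `0` for a colliding pair). -/
def U (m : Fin N → ℝ) (x : Conf d N) : ℝ :=
  ∑ i : Fin N, ∑ j : Fin N, if i < j then m i * m j / ‖x i - x j‖ else 0

/-- The time interval `(t₀, T)`, where `T ∈ (t₀, +∞]` is extended-real. -/
def timeSet (t0 : ℝ) (T : EReal) : Set ℝ := {t : ℝ | t0 < t ∧ (t : EReal) < T}

/-- Membership of the pair (curve, derivative) `(φ, φ')` in `D₀^{1,2}(t₀, T)`:
`φ` starts at `0`, takes values in `X`, is the integral of `φ'` (hence locally
absolutely continuous), and `φ'` has finite `L²` mass norm on `(t₀, T)`. -/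
def InD (m : Fin N → ℝ) (t0 : ℝ) (T : EReal) (φ φ' : ℝ → Conf d N) : Prop :=
  φ t0 = 0 ∧
  (∀ t : ℝ, t0 ≤ t → (t : EReal) < T → inX m (φ t)) ∧
  (∀ t : ℝ, t0 ≤ t → (t : EReal) < T → φ t = ∫ s in Set.Ioc t0 t, φ' s) ∧
  (∀ t : ℝ, t0 ≤ t → (t : EReal) < T → IntegrableOn φ' (Set.Ioc t0 t)) ∧
  IntegrableOn (fun t => (mnorm m (φ' t)) ^ 2) (timeSet t0 T)

/-- The norm `‖φ‖_{D_T}`. -/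
def Dnorm (m : Fin N → ℝ) (t0 : ℝ) (T : EReal) (φ' : ℝ → Conf d N) : ℝ :=
  Real.sqrt (∫ t in timeSet t0 T, (mnorm m (φ' t)) ^ 2)

/-- The motion `γ(t) = φ(t) + t a + x - a` associated with `φ` in the hyperbolic case. -/
def hypCurve (a x : Conf d N) (φ : ℝ → Conf d N) (t : ℝ) : Conf d N :=
  φ t + t • a + x - a

/-- The integrand of the hyperbolic renormalized Lagrangian action. -/
def hypIntegrand (m : Fin N → ℝ) (a x : Conf d N) (φ φ' : ℝ → Conf d N) (t : ℝ) : ℝ :=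
  (mnorm m (φ' t)) ^ 2 / 2 + U m (hypCurve a x φ t) - U m (t • a)

/-- The hyperbolic renormalized Lagrangian action `A_{x,[1,T]}(φ)`, with values in
`ℝ ∪ {+∞}` : it equals the integral of the renormalized Lagrangian if this integrand is
integrable and the motion is a.e. collision-free, and `+∞` otherwise. -/
def hypAction (m : Fin N → ℝ) (a x : Conf d N) (T : EReal) (φ φ' : ℝ → Conf d N) : EReal :=
  if IntegrableOn (hypIntegrand m a x φ φ') (timeSet 1 T) ∧
      (∀ᵐ t ∂volume.restrict (timeSet 1 T), ¬ collision (hypCurve a x φ t))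
  then ((∫ t in timeSet 1 T, hypIntegrand m a x φ φ' t : ℝ) : EReal)
  else (⊤ : EReal)

/-- The infimum of the hyperbolic renormalized action over `D₀^{1,2}(1,T)`. -/
def hypInf (m : Fin N → ℝ) (a x : Conf d N) (T : EReal) : EReal :=
  ⨅ (φ : ℝ → Conf d N) (φ' : ℝ → Conf d N) (_ : InD m 1 T φ φ'), hypAction m a x T φ φ'

/-- The renormalized value function `v(x)` in the hyperbolic case. -/
def hypValue (m : Fin N → ℝ) (a x : Conf d N) : ℝ :=
  (hypInf m a x ⊤).toReal - minner m a x


/-- The Hessian quadratic form `⟨∇²U(q) ψ, ψ⟩`, expressed as the second derivative of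
`s ↦ U(q + s ψ)` at `s = 0`. -/
def hessQ (m : Fin N → ℝ) (q ψ : Conf d N) : ℝ :=
  iteratedDeriv 2 (fun s : ℝ => U m (q + s • ψ)) 0

/-- The Hessian bilinear form `⟨∇²U(q) ψ, ζ⟩`, obtained from `hessQ` by polarization. -/
def hessB (m : Fin N → ℝ) (q ψ ζ : Conf d N) : ℝ :=
  (hessQ m q (ψ + ζ) - hessQ m q ψ - hessQ m q ζ) / 2

/-- The Hilbert space `L²((1,∞); ℝ^{dN})`, identified with `D₀^{1,2}(1,+∞)` via the map
`φ ↦ φ̇` (whose inverse is `f ↦ (t ↦ ∫_1^t f)`). -/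
abbrev Hsp (d N : ℕ) := Lp (Conf d N) 2 (volume.restrict (Set.Ioi (1:ℝ)))

/-- The second variation `d²A_x(φ)[ψ, ζ] = ∫_1^∞ ⟨ψ̇, ζ̇⟩_M + ⟨∇²U(γ(t)) ψ(t), ζ(t)⟩ dt`
along the motion `γ`, expressed through the derivatives `f = ψ̇`, `g = ζ̇`. -/
def secondVar (m : Fin N → ℝ) (γ : ℝ → Conf d N) (f g : ℝ → Conf d N) : ℝ :=
  ∫ t in Set.Ioi (1:ℝ),
    (minner m (f t) (g t) +
      hessB m (γ t) (∫ s in Set.Ioc (1:ℝ) t, f s) (∫ s in Set.Ioc (1:ℝ) t, g s))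

/-- Invertibility of the second variation `d²A_x(φ)` along the motion `γ`, as a bilinear
form on `D₀^{1,2}(1,+∞) ≅ L²((1,∞))` : the induced linear map into the (continuous) dual
is bijective. -/
def FormInvertible (m : Fin N → ℝ) (γ : ℝ → Conf d N) : Prop :=
  ∀ L : Hsp d N →L[ℝ] ℝ, ∃! f : Hsp d N, ∀ g : Hsp d N, secondVar m γ f g = L g

/-!
Write a curve of `D₀^{1,2}` through its velocity `f ∈ L²(1,∞)`. Scaling gives `∇U(c q) = c⁻² ∇U(q)`
and `∇²U(c q) = c⁻³ ∇²U(q)`, and `γ(t) / t → a` off the collisions, so near a collision-free motion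
the integrand of the action and its first two derivatives in `f` are dominated by `t ^ (-3/2)`:
the action is twice differentiable there. Its critical points with invertible second variation are
isolated, in particular the minimizers are.

On the other hand the set of minimizers is compact. The action is coercive, so a sequence of
minimizers has a weak limit; by Fatou's lemma this limit has finite action and the potential part is
lower semicontinuous. By minimality no kinetic energy is lost in the limit, hence the convergence is
strong. A compact set of isolated points is finite.
-/

section WeakCompactness

lemma exists_weakly_convergent_subseq {H : Type*} [NormedAddCommGroup H] [InnerProductSpace ℝ H]
    [CompleteSpace H] [TopologicalSpace.SeparableSpace H] (u : ℕ → H) {C : ℝ}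
    (hu : ∀ n, ‖u n‖ ≤ C) :
    ∃ (v : H) (σ : ℕ → ℕ), StrictMono σ ∧
      ∀ ℓ : H →L[ℝ] ℝ, Tendsto (fun n => ℓ (u (σ n))) atTop (𝓝 (ℓ v)) := by
  have hmem : ∀ n, StrongDual.toWeakDual (InnerProductSpace.toDual ℝ H (u n)) ∈
      (WeakDual.toStrongDual ⁻¹' Metric.closedBall (0 : StrongDual ℝ H) C) := fun n => by
    simpa using hu n
  obtain ⟨k, -, σ, hσ, hlim⟩ := WeakDual.isSeqCompact_closedBall ℝ H 0 C hmem
  refine ⟨(InnerProductSpace.toDual ℝ H).symm (WeakDual.toStrongDual k), σ, hσ, fun ℓ => ?_⟩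
  obtain ⟨g, rfl⟩ := (InnerProductSpace.toDual ℝ H).surjective ℓ
  have hg := ((WeakDual.eval_continuous g).tendsto k).comp hlim
  rw [InnerProductSpace.toDual_apply_apply, real_inner_comm, InnerProductSpace.toDual_symm_apply]
  refine Tendsto.congr (fun n => ?_) hg
  exact real_inner_comm _ _

/-- Choosing Euclidean coordinates on `E` makes `Lp E 2 μ` a retract of a Hilbert space. -/
lemma exists_weakly_convergent_subseq_Lp {α E : Type*} [MeasurableSpace α] {μ : Measure α}
    [IsSeparable μ] [NormedAddCommGroup E] [NormedSpace ℝ E]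
    [FiniteDimensional ℝ E] (u : ℕ → Lp E 2 μ) {C : ℝ} (hu : ∀ n, ‖u n‖ ≤ C) :
    ∃ (v : Lp E 2 μ) (σ : ℕ → ℕ), StrictMono σ ∧
      ∀ ℓ : Lp E 2 μ →L[ℝ] ℝ, Tendsto (fun n => ℓ (u (σ n))) atTop (𝓝 (ℓ v)) := by
  have : Fact ((2 : ℝ≥0∞) ≠ ∞) := ⟨by norm_num⟩
  let e : E ≃L[ℝ] EuclideanSpace ℝ (Fin (Module.finrank ℝ E)) := toEuclidean
  set S := e.toContinuousLinearMap.compLpL 2 μ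
  set R := e.symm.toContinuousLinearMap.compLpL 2 μ
  have hRS : ∀ f, R (S f) = f := fun f => by
    refine Lp.ext ?_
    filter_upwards [ContinuousLinearMap.coeFn_compLpL e.symm.toContinuousLinearMap (S f),
      ContinuousLinearMap.coeFn_compLpL e.toContinuousLinearMap f] with t hR hS
    rw [hR, hS]
    exact e.symm_apply_apply _
  obtain ⟨v, σ, hσ, hv⟩ := exists_weakly_convergent_subseq (fun n => S (u n))
    fun n => S.le_opNorm_of_le (hu n)
  refine ⟨R v, σ, hσ, fun ℓ => (hv (ℓ ∘L R)).congr fun n => ?_⟩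
  exact congrArg ℓ (hRS _)

lemma tendsto_clm_of_weak {ι X E : Type*} [NormedAddCommGroup X] [NormedSpace ℝ X]
    [NormedAddCommGroup E] [NormedSpace ℝ E] [FiniteDimensional ℝ E] {l : Filter ι}
    {u : ι → X} {v : X} (h : ∀ ℓ : X →L[ℝ] ℝ, Tendsto (fun n => ℓ (u n)) l (𝓝 (ℓ v)))
    (T : X →L[ℝ] E) : Tendsto (fun n => T (u n)) l (𝓝 (T v)) := by
  let b := (Module.finBasis ℝ E).equivFunL
  refine (b.toHomeomorph.isInducing.tendsto_nhds_iff).2 (tendsto_pi_nhds.2 fun i => ?_)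
  exact h (ContinuousLinearMap.proj i ∘L b.toContinuousLinearMap ∘L T)

end WeakCompactness

section Fatou

variable {α : Type*} [MeasurableSpace α] {μ : Measure α} {F : ℕ → α → ℝ} {b : α → ℝ} {L : ℝ}

lemma lintegral_liminf_ofReal_sub_le (hb : Integrable b μ) (hF : ∀ n, Integrable (F n) μ)
    (hbF : ∀ n, b ≤ᵐ[μ] F n) (hL : Tendsto (fun n => ∫ t, F n t ∂μ) atTop (𝓝 L)) :
    ∫⁻ t, liminf (fun n => ENNReal.ofReal (F n t - b t)) atTop ∂μ
      ≤ ENNReal.ofReal (L - ∫ t, b t ∂μ) := by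
  refine (lintegral_liminf_le' fun n => ((hF n).sub hb).aemeasurable.ennreal_ofReal).trans ?_
  refine (Tendsto.liminf_eq ?_).le
  refine ((ENNReal.continuous_ofReal.tendsto _).comp (hL.sub_const _)).congr fun n => ?_
  rw [Function.comp_apply, ← integral_sub (hF n) hb]
  exact ofReal_integral_eq_lintegral_ofReal ((hF n).sub hb)
    ((hbF n).mono fun t ht => sub_nonneg.2 ht)

lemma ae_not_tendsto_atTop_of_integral_tendsto (hb : Integrable b μ)
    (hF : ∀ n, Integrable (F n) μ) (hbF : ∀ n, b ≤ᵐ[μ] F n)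
    (hL : Tendsto (fun n => ∫ t, F n t ∂μ) atTop (𝓝 L)) :
    ∀ᵐ t ∂μ, ¬ Tendsto (fun n => F n t) atTop atTop := by
  have hmeas : AEMeasurable
      (fun t => liminf (fun n => ENNReal.ofReal (F n t - b t)) atTop) μ := by
    simp only [liminf_eq_iSup_iInf_of_nat]
    exact .iSup fun k => .iInf fun n => .iInf fun _ =>
      ((hF n).sub hb).aemeasurable.ennreal_ofReal
  have hfin := ae_lt_top' hmeas
    ((lintegral_liminf_ofReal_sub_le hb hF hbF hL).trans_lt ENNReal.ofReal_lt_top).ne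
  filter_upwards [hfin] with t ht hlim
  have htop := (ENNReal.tendsto_ofReal_atTop.comp
    (tendsto_atTop_add_const_right atTop (-b t) hlim)).liminf_eq
  exact ht.ne htop

lemma integral_le_of_tendsto_ae_of_integral_tendsto {G : α → ℝ} (hb : Integrable b μ)
    (hF : ∀ n, Integrable (F n) μ) (hbF : ∀ n, b ≤ᵐ[μ] F n)
    (hL : Tendsto (fun n => ∫ t, F n t ∂μ) atTop (𝓝 L))
    (hG : ∀ᵐ t ∂μ, Tendsto (fun n => F n t) atTop (𝓝 (G t))) :
    Integrable G μ ∧ ∫ t, G t ∂μ ≤ L := by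
  have hGm : AEStronglyMeasurable G μ :=
    aestronglyMeasurable_of_tendsto_ae _ (fun n => (hF n).aestronglyMeasurable) hG
  have hbG : b ≤ᵐ[μ] G := by
    filter_upwards [hG, ae_all_iff.2 hbF] with t ht hbt using ge_of_tendsto' ht hbt
  have hpos : 0 ≤ᵐ[μ] G - b := hbG.mono fun t ht => sub_nonneg.2 ht
  have hlim : ∫⁻ t, ENNReal.ofReal ((G - b) t) ∂μ ≤ ENNReal.ofReal (L - ∫ t, b t ∂μ) := by
    refine (lintegral_congr_ae ?_).trans_le (lintegral_liminf_ofReal_sub_le hb hF hbF hL)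
    filter_upwards [hG] with t ht
    exact ((ENNReal.continuous_ofReal.tendsto _).comp (ht.sub_const (b t))).liminf_eq.symm
  have hint : Integrable (G - b) μ :=
    ⟨hGm.sub hb.aestronglyMeasurable,
      (hasFiniteIntegral_iff_ofReal hpos).2 (hlim.trans_lt ENNReal.ofReal_lt_top)⟩
  have hGint : Integrable G μ := by simpa using hint.add hb
  have hbL : ∫ t, b t ∂μ ≤ L :=
    ge_of_tendsto' hL fun n => integral_mono_ae hb (hF n) (hbF n)
  refine ⟨hGint, ?_⟩
  have := (ENNReal.ofReal_le_ofReal_iff (sub_nonneg.2 hbL)).1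
    ((ofReal_integral_eq_lintegral_ofReal hint hpos).trans_le hlim)
  rw [integral_sub' hGint hb] at this
  linarith

end Fatou

section Primitive

/-- Lebesgue measure on the time interval `(1, ∞)`. -/
abbrev halfLine : Measure ℝ := volume.restrict (Set.Ioi (1:ℝ))

lemma halfLine_Ioc_ne_top (s t : ℝ) : halfLine (Set.Ioc s t) ≠ ∞ :=
  ((Measure.restrict_apply_le _ _).trans_lt measure_Ioc_lt_top).ne

/-- The indicator function of `(s, t]` as an element of `L²((1, ∞))`. -/
def indicatorIoc (s t : ℝ) : Lp ℝ 2 halfLine :=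
  indicatorConstLp 2 measurableSet_Ioc (halfLine_Ioc_ne_top s t) 1

lemma integrableOn_Ioc_Lp {E : Type*} [NormedAddCommGroup E] (f : Lp E 2 halfLine) (t : ℝ) :
    IntegrableOn f (Set.Ioc 1 t) := by
  have := ((Lp.memLp f).mono_measure (Measure.restrict_mono Ioc_subset_Ioi_self le_rfl)
    : MemLp f 2 (volume.restrict (Set.Ioc 1 t)))
  exact this.integrable (by norm_num)

variable {E : Type*} [NormedAddCommGroup E] [NormedSpace ℝ E] [CompleteSpace E] {s t : ℝ}

lemma norm_lpPairing_apply_le {α E F G : Type*} [MeasurableSpace α] {μ : Measure α}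
    [NormedAddCommGroup E] [NormedSpace ℝ E] [NormedAddCommGroup F] [NormedSpace ℝ F]
    [NormedAddCommGroup G] [NormedSpace ℝ G] [CompleteSpace G] (B : E →L[ℝ] F →L[ℝ] G)
    (f : Lp E 2 μ) (g : Lp F 2 μ) : ‖B.lpPairing μ 2 2 f g‖ ≤ ‖B‖ * ‖f‖ * ‖g‖ := by
  rw [ContinuousLinearMap.lpPairing_eq_integral, ← integral_congr_ae (B.coeFn_holder (r := 1) f g),
    ← L1.integral_eq_integral]
  exact (L1.norm_integral_le _).trans (B.norm_holder_apply_apply_le f g)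

/-- The primitive `∫ s in 1..t, f s` of a square-integrable `f`, as a continuous linear map in
`f`; it is the pairing of `f` with the indicator function of `(1, t]`. -/
def prim (t : ℝ) : Lp E 2 halfLine →L[ℝ] E :=
  (ContinuousLinearMap.lsmul ℝ ℝ).lpPairing halfLine 2 2 (indicatorIoc 1 t)

lemma lpPairing_indicatorIoc (hs : 1 ≤ s) (f : Lp E 2 halfLine) :
    (ContinuousLinearMap.lsmul ℝ ℝ).lpPairing halfLine 2 2 (indicatorIoc s t) f
      = ∫ r in Set.Ioc s t, f r := by
  rw [ContinuousLinearMap.lpPairing_eq_integral]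
  have h : (fun r => ContinuousLinearMap.lsmul ℝ ℝ (indicatorIoc s t r) (f r)) =ᵐ[halfLine]
      (Set.Ioc s t).indicator f := by
    filter_upwards [indicatorConstLp_coeFn (p := 2) (s := Set.Ioc s t) (c := (1:ℝ))
      (hs := measurableSet_Ioc) (hμs := halfLine_Ioc_ne_top s t)] with r hr
    by_cases hrt : r ∈ Set.Ioc s t <;> simp [indicatorIoc, hr, hrt]
  have hsub : Set.Ioc s t ⊆ Set.Ioi 1 := fun r hr => hs.trans_lt hr.1
  rw [integral_congr_ae h, integral_indicator measurableSet_Ioc,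
    Measure.restrict_restrict measurableSet_Ioc, Set.inter_eq_left.2 hsub]

lemma prim_apply (t : ℝ) (f : Lp E 2 halfLine) : prim t f = ∫ s in Set.Ioc 1 t, f s :=
  lpPairing_indicatorIoc le_rfl f

lemma norm_indicatorIoc_le (hst : s ≤ t) : ‖indicatorIoc s t‖ ≤ √(t - s) := by
  rw [indicatorIoc, norm_indicatorConstLp (by norm_num) (by norm_num), norm_one, one_mul,
    ENNReal.toReal_ofNat, ← Real.sqrt_eq_rpow, ← Real.volume_real_Ioc_of_le hst]
  exact Real.sqrt_le_sqrt (ENNReal.toReal_mono measure_Ioc_lt_top.ne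
    (Measure.restrict_apply_le _ _))

lemma prim_sub_prim (hs : 1 ≤ s) (hst : s ≤ t) (f : Lp E 2 halfLine) :
    prim t f - prim s f = ∫ r in Set.Ioc s t, f r := by
  rw [prim_apply, prim_apply, ← Ioc_union_Ioc_eq_Ioc hs hst, setIntegral_union
    (Ioc_disjoint_Ioc_of_le le_rfl) measurableSet_Ioc (integrableOn_Ioc_Lp f s)
    ((integrableOn_Ioc_Lp f t).mono_set (Ioc_subset_Ioc_left hs)), add_sub_cancel_left]

lemma norm_prim_sub_prim_le (hs : 1 ≤ s) (hst : s ≤ t) :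
    ‖(prim t - prim s : Lp E 2 halfLine →L[ℝ] E)‖ ≤ √(t - s) := by
  refine ContinuousLinearMap.opNorm_le_bound _ (Real.sqrt_nonneg _) fun f => ?_
  rw [sub_apply, prim_sub_prim hs hst, ← lpPairing_indicatorIoc hs]
  refine (norm_lpPairing_apply_le _ _ _).trans ?_
  gcongr
  exact (mul_le_of_le_one_left (norm_nonneg _) ContinuousLinearMap.opNorm_lsmul_le).trans
    (norm_indicatorIoc_le hst)

lemma prim_one : (prim 1 : Lp E 2 halfLine →L[ℝ] E) = 0 := by
  ext f
  simp [prim_apply]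

lemma norm_prim_le (ht : 1 ≤ t) : ‖(prim t : Lp E 2 halfLine →L[ℝ] E)‖ ≤ √t := by
  have := norm_prim_sub_prim_le (E := E) le_rfl ht
  rw [prim_one, sub_zero] at this
  exact this.trans (Real.sqrt_le_sqrt (by linarith))

lemma norm_prim_apply_le (ht : 1 ≤ t) (f : Lp E 2 halfLine) : ‖prim t f‖ ≤ √t * ‖f‖ :=
  ((prim (E := E) t).le_opNorm f).trans
    (mul_le_mul_of_nonneg_right (norm_prim_le (E := E) ht) (norm_nonneg f))

lemma continuousOn_prim :
    ContinuousOn (fun t => (prim t : Lp E 2 halfLine →L[ℝ] E)) (Set.Ici 1) := by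
  have hdist : ∀ s ∈ Set.Ici (1:ℝ), ∀ t ∈ Set.Ici (1:ℝ),
      ‖(prim t - prim s : Lp E 2 halfLine →L[ℝ] E)‖ ≤ √|t - s| := fun s hs t ht => by
    rcases le_total s t with hst | hts
    · rw [abs_of_nonneg (sub_nonneg.2 hst)]
      exact norm_prim_sub_prim_le hs hst
    · rw [abs_sub_comm, abs_of_nonneg (sub_nonneg.2 hts), norm_sub_rev]
      exact norm_prim_sub_prim_le ht hts
  intro s hs
  refine tendsto_iff_norm_sub_tendsto_zero.2 ?_
  refine squeeze_zero' (Eventually.of_forall fun _ => norm_nonneg _)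
    (eventually_mem_nhdsWithin.mono fun t ht => hdist s hs t ht) ?_
  have hcont : Continuous fun t : ℝ => √|t - s| := by fun_prop
  simpa using (hcont.tendsto s).mono_left nhdsWithin_le_nhds

lemma prim_compLpL {F : Type*} [NormedAddCommGroup F] [NormedSpace ℝ F] [CompleteSpace F]
    (T : E →L[ℝ] F) (t : ℝ) (f : Lp E 2 halfLine) :
    prim t (T.compLpL 2 halfLine f) = T (prim t f) := by
  rw [prim_apply, prim_apply, ← T.integral_comp_comm (integrableOn_Ioc_Lp f t)]
  refine integral_congr_ae ?_
  exact ae_mono (Measure.restrict_mono Ioc_subset_Ioi_self le_rfl) (T.coeFn_compLpL f)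

end Primitive

section Decay

/-- The weight `t ^ (-3/2)` dominating all the integrands that occur along hyperbolic motions. -/
def decay (t : ℝ) : ℝ := √t / t ^ 2

lemma decay_nonneg (t : ℝ) : 0 ≤ decay t := by
  rw [decay]
  positivity

lemma integrable_decay : Integrable decay halfLine := by
  have h : IntegrableOn (fun t : ℝ => t ^ (-(3 / 2) : ℝ)) (Set.Ioi 1) :=
    integrableOn_Ioi_rpow_of_lt (by norm_num) one_pos
  refine h.congr_fun (fun t ht => ?_) measurableSet_Ioi
  have ht0 : (0:ℝ) < t := one_pos.trans ht
  rw [decay, Real.sqrt_eq_rpow, ← Real.rpow_natCast t 2, ← Real.rpow_sub ht0]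
  norm_num

lemma sqrt_sq_div_cube_le_decay {t : ℝ} (ht : 1 ≤ t) : √t ^ 2 / t ^ 3 ≤ decay t := by
  have ht0 : 0 < t := one_pos.trans_le ht
  have h1 : 1 ≤ √t := Real.one_le_sqrt.2 ht
  rw [Real.sq_sqrt ht0.le, decay, div_le_div_iff₀ (by positivity) (by positivity)]
  nlinarith [mul_nonneg (sub_nonneg.2 h1) (pow_pos ht0 3).le]

end Decay

section Homogeneous

variable {E F : Type*} [NormedAddCommGroup E] [NormedSpace ℝ E] [NormedAddCommGroup F]
  [NormedSpace ℝ F]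

lemma fderiv_smul_of_forall_map_smul {f : E → F} {c k : ℝ} (hc : c ≠ 0)
    (h : ∀ x, f (c • x) = k • f x) (x : E) : fderiv ℝ f (c • x) = (c⁻¹ * k) • fderiv ℝ f x := by
  have hf : (f <| c • ·) = k • f := funext h
  rw [mul_smul, eq_inv_smul_iff₀ hc, ← fderiv_comp_smul, hf, fderiv_const_smul_field]
  rfl

lemma exists_le_sub_of_differentiableAt {f : E → ℝ} {a : E} (hf : DifferentiableAt ℝ f a)
    {S : Set E} {M : ℝ} (hM : ∀ q ∈ S, M ≤ f q) :
    ∃ C, 0 ≤ C ∧ ∀ q ∈ S, -(C * ‖q - a‖) ≤ f q - f a := by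
  obtain ⟨c, hc⟩ := hf.isBigO_sub.bound
  obtain ⟨δ, hδ, hball⟩ := Metric.eventually_nhds_iff.1 hc
  refine ⟨max c (|f a - M| / δ), le_max_of_le_right (by positivity), fun q hq => ?_⟩
  rcases lt_or_ge ‖q - a‖ δ with hnear | hfar
  · have hbound : |f q - f a| ≤ max c (|f a - M| / δ) * ‖q - a‖ :=
      (hball (by rwa [dist_eq_norm])).trans (by gcongr; exact le_max_left _ _)
    exact (abs_le.1 hbound).1
  · have hbound : |f a - M| ≤ max c (|f a - M| / δ) * ‖q - a‖ := by
      calc |f a - M| = |f a - M| / δ * δ := by field_simp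
        _ ≤ _ := by gcongr; exact le_max_right _ _
    linarith [hM q hq, le_abs_self (f a - M)]

lemma iteratedDeriv_two_comp_add_smul {f : E → F} {q : E} (hf : ContDiffAt ℝ 2 f q)
    (v : E) : iteratedDeriv 2 (fun s : ℝ => f (q + s • v)) 0 = fderiv ℝ (fderiv ℝ f) q v v := by
  have hline : ∀ s : ℝ, HasDerivAt (fun s : ℝ => q + s • v) v s := fun s => by
    simpa using ((hasDerivAt_id s).smul_const v).const_add q
  have htendsto : Tendsto (fun s : ℝ => q + s • v) (𝓝 0) (𝓝 q) := by
    simpa using (hline 0).continuousAt.tendsto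
  have hderiv : deriv (fun s : ℝ => f (q + s • v)) =ᶠ[𝓝 0] fun s => fderiv ℝ f (q + s • v) v := by
    filter_upwards [htendsto.eventually (hf.eventually (by simp))] with s hs
    exact ((hs.differentiableAt (by simp)).hasFDerivAt.comp_hasDerivAt s (hline s)).deriv
  have hsnd : HasFDerivAt (fderiv ℝ f) (fderiv ℝ (fderiv ℝ f) q) (q + (0:ℝ) • v) := by
    rw [zero_smul, add_zero]
    exact ((hf.fderiv_right (m := 1) (by norm_num)).differentiableAt one_ne_zero).hasFDerivAt
  rw [iteratedDeriv_succ, iteratedDeriv_one, hderiv.deriv_eq]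
  have hcomp : HasDerivAt (fun s : ℝ => fderiv ℝ f (q + s • v)) (fderiv ℝ (fderiv ℝ f) q v) 0 :=
    hsnd.comp_hasDerivAt 0 (hline 0)
  simpa only [map_zero, add_zero] using (hcomp.clm_apply (hasDerivAt_const 0 v)).deriv

end Homogeneous

section Potential

variable {m : Fin N → ℝ} {p q : Conf d N} {c : ℝ}

lemma collision_smul_iff (hc : c ≠ 0) : collision (c • q) ↔ collision q := by
  simp only [collision, Pi.smul_apply, smul_right_inj hc]

lemma isOpen_setOf_not_collision : IsOpen {q : Conf d N | ¬ collision q} := by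
  have h : {q : Conf d N | ¬ collision q} = ⋂ i, ⋂ j, ⋂ (_ : i ≠ j), {q | q i ≠ q j} := by
    ext q
    simp [collision]
  rw [h]
  exact isOpen_iInter_of_finite fun i => isOpen_iInter_of_finite fun j =>
    isOpen_iInter_of_finite fun _ => isOpen_ne_fun (continuous_apply i) (continuous_apply j)

lemma measurable_U : Measurable (U m : Conf d N → ℝ) := by
  refine Finset.measurable_sum _ fun i _ => Finset.measurable_sum _ fun j _ => ?_
  split_ifs <;> fun_prop

lemma U_nonneg (hm : ∀ i, 0 ≤ m i) (q : Conf d N) : 0 ≤ U m q := by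
  refine Finset.sum_nonneg fun i _ => Finset.sum_nonneg fun j _ => ?_
  have := mul_nonneg (hm i) (hm j)
  split_ifs <;> positivity

lemma mul_div_norm_sub_le_U (hm : ∀ i, 0 ≤ m i) {i j : Fin N} (hij : i < j) (q : Conf d N) :
    m i * m j / ‖q i - q j‖ ≤ U m q := by
  have hnn : ∀ k l, 0 ≤ if k < l then m k * m l / ‖q k - q l‖ else 0 := fun k l => by
    have := mul_nonneg (hm k) (hm l)
    split_ifs <;> positivity
  calc m i * m j / ‖q i - q j‖ = if i < j then m i * m j / ‖q i - q j‖ else 0 := (if_pos hij).symm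
    _ ≤ ∑ l, if i < l then m i * m l / ‖q i - q l‖ else 0 :=
      Finset.single_le_sum (fun l _ => hnn i l) (Finset.mem_univ j)
    _ ≤ U m q := Finset.single_le_sum
      (f := fun k => ∑ l, if k < l then m k * m l / ‖q k - q l‖ else 0)
      (fun k _ => Finset.sum_nonneg fun l _ => hnn k l) (Finset.mem_univ i)

lemma tendsto_U_atTop_of_collision (hm : ∀ i, 0 < m i) {ι : Type*} {l : Filter ι}
    {u : ι → Conf d N} (hp : collision p) (hu : Tendsto u l (𝓝 p))
    (huc : ∀ n, ¬ collision (u n)) : Tendsto (fun n => U m (u n)) l atTop := by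
  obtain ⟨i, j, hlt, hij⟩ : ∃ i j, i < j ∧ p i = p j := by
    obtain ⟨i, j, hne, h⟩ := hp
    exact hne.lt_or_gt.elim (fun hlt => ⟨i, j, hlt, h⟩) fun hgt => ⟨j, i, hgt, h.symm⟩
  refine tendsto_atTop_mono (fun n => mul_div_norm_sub_le_U (fun i => (hm i).le) hlt (u n)) ?_
  have h0 : Tendsto (fun n => ‖u n i - u n j‖) l (𝓝[>] 0) := by
    refine tendsto_nhdsWithin_iff.2 ⟨?_, Eventually.of_forall fun n => ?_⟩
    · simpa [hij] using ((tendsto_pi_nhds.1 hu i).sub (tendsto_pi_nhds.1 hu j)).norm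
    · exact norm_pos_iff.2 <| sub_ne_zero.2 fun h => huc n ⟨i, j, hlt.ne, h⟩
  simp only [div_eq_mul_inv]
  exact (tendsto_inv_nhdsGT_zero.comp h0).const_mul_atTop (mul_pos (hm i) (hm j))

lemma contDiffAt_U (hq : ¬ collision q) {n : ℕ∞} : ContDiffAt ℝ n (U m) q := by
  refine ContDiffAt.sum fun i _ => ContDiffAt.sum fun j _ => ?_
  split_ifs with hij
  · have hne : q i - q j ≠ 0 := sub_ne_zero.2 fun h => hq ⟨i, j, hij.ne, h⟩
    have hsub : ContDiffAt ℝ n (fun q : Conf d N => q i - q j) q := by fun_prop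
    exact contDiffAt_const.div (hsub.norm ℝ hne) (norm_ne_zero_iff.2 hne)
  · exact contDiffAt_const

lemma hasFDerivAt_U (hq : ¬ collision q) : HasFDerivAt (U m) (fderiv ℝ (U m) q) q :=
  ((contDiffAt_U (n := 1) hq).differentiableAt (by norm_num)).hasFDerivAt

lemma contDiffAt_fderiv_U (hq : ¬ collision q) {n : ℕ} :
    ContDiffAt ℝ n (fderiv ℝ (U m)) q :=
  (contDiffAt_U (n := (n + 1 : ℕ)) hq).fderiv_right (by norm_num)

lemma hasFDerivAt_fderiv_U (hq : ¬ collision q) :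
    HasFDerivAt (fderiv ℝ (U m)) (fderiv ℝ (fderiv ℝ (U m)) q) q :=
  ((contDiffAt_fderiv_U (n := 1) hq).differentiableAt (by norm_num)).hasFDerivAt

lemma continuousOn_U : ContinuousOn (U m) {q : Conf d N | ¬ collision q} := fun _ hq =>
  (hasFDerivAt_U hq).continuousAt.continuousWithinAt

lemma continuousOn_fderiv_U :
    ContinuousOn (fderiv ℝ (U m)) {q : Conf d N | ¬ collision q} := fun _ hq =>
  (hasFDerivAt_fderiv_U hq).continuousAt.continuousWithinAt

lemma continuousOn_fderiv_fderiv_U :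
    ContinuousOn (fderiv ℝ (fderiv ℝ (U m))) {q : Conf d N | ¬ collision q} := fun _ hq =>
  ((contDiffAt_fderiv_U (n := 1) hq).fderiv_right (m := 0)
    (by norm_num)).continuousAt.continuousWithinAt

lemma hessQ_eq (hq : ¬ collision q) (v : Conf d N) :
    hessQ m q v = fderiv ℝ (fderiv ℝ (U m)) q v v :=
  iteratedDeriv_two_comp_add_smul (contDiffAt_U (n := 2) hq) v

lemma hessB_eq (hq : ¬ collision q) (v z : Conf d N) :
    hessB m q v z = fderiv ℝ (fderiv ℝ (U m)) q v z := by
  have hsymm : fderiv ℝ (fderiv ℝ (U m)) q v z = fderiv ℝ (fderiv ℝ (U m)) q z v :=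
    (contDiffAt_U (n := 2) hq).isSymmSndFDerivAt (by simp) v z
  rw [hessB, hessQ_eq hq, hessQ_eq hq, hessQ_eq hq]
  simp only [map_add, add_apply]
  linarith

lemma U_smul (hc : 0 < c) (q : Conf d N) : U m (c • q) = c⁻¹ * U m q := by
  simp_rw [U, Finset.mul_sum]
  refine Finset.sum_congr rfl fun i _ => Finset.sum_congr rfl fun j _ => ?_
  split_ifs
  · rw [Pi.smul_apply, Pi.smul_apply, ← smul_sub, norm_smul, Real.norm_of_nonneg hc.le]
    ring
  · rw [mul_zero]

lemma fderiv_U_smul (hc : 0 < c) (q : Conf d N) :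
    fderiv ℝ (U m) (c • q) = (c ^ 2)⁻¹ • fderiv ℝ (U m) q := by
  rw [fderiv_smul_of_forall_map_smul hc.ne' (U_smul (m := m) hc)]
  ring_nf

lemma fderiv_fderiv_U_smul (hc : 0 < c) (q : Conf d N) :
    fderiv ℝ (fderiv ℝ (U m)) (c • q) = (c ^ 3)⁻¹ • fderiv ℝ (fderiv ℝ (U m)) q := by
  rw [fderiv_smul_of_forall_map_smul hc.ne' fun q => fderiv_U_smul (m := m) (d := d) hc q]
  ring_nf

lemma U_smul_add_sub (hc : 0 < c) (a v : Conf d N) :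
    U m (c • a + v) - U m (c • a) = c⁻¹ * (U m (a + c⁻¹ • v) - U m a) := by
  have hscale : c • a + v = c • (a + c⁻¹ • v) := by rw [smul_add, smul_inv_smul₀ hc.ne']
  rw [hscale, U_smul hc, U_smul hc, mul_sub]

/-- The potential lies above a cone at `a`, even across collisions since it is nonnegative;
homogeneity transports the cone to `t • a`. -/
lemma exists_le_U_sub (hm : ∀ i, 0 ≤ m i) {a : Conf d N} (ha : ¬ collision a) :
    ∃ C, 0 ≤ C ∧ ∀ t, 0 < t → ∀ v, -(C * ‖v‖ / t ^ 2) ≤ U m (t • a + v) - U m (t • a) := by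
  obtain ⟨C, hC, hle⟩ := exists_le_sub_of_differentiableAt
    (hasFDerivAt_U (m := m) ha).differentiableAt (S := univ) fun q _ => U_nonneg hm q
  refine ⟨C, hC, fun t ht v => ?_⟩
  have hcone := hle (a + t⁻¹ • v) (mem_univ _)
  rw [add_sub_cancel_left, norm_smul, Real.norm_of_nonneg (inv_nonneg.2 ht.le)] at hcone
  rw [U_smul_add_sub ht]
  calc -(C * ‖v‖ / t ^ 2) = t⁻¹ * -(C * (t⁻¹ * ‖v‖)) := by ring
    _ ≤ _ := by gcongr

lemma exists_U_sub_le {a : Conf d N} (ha : ¬ collision a) {K : Set (Conf d N)} (hK : IsCompact K)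
    (hKc : K ⊆ {q | ¬ collision q}) :
    ∃ C, 0 ≤ C ∧ ∀ t, 0 < t → ∀ v, a + t⁻¹ • v ∈ K →
      U m (t • a + v) - U m (t • a) ≤ C * ‖v‖ / t ^ 2 := by
  obtain ⟨M, hM⟩ := hK.bddAbove_image (continuousOn_U (m := m).mono hKc)
  obtain ⟨C, hC, hle⟩ := exists_le_sub_of_differentiableAt
    (hasFDerivAt_U (m := m) ha).differentiableAt.neg (S := K) (M := -M)
    fun q hq => neg_le_neg (hM (mem_image_of_mem _ hq))
  refine ⟨C, hC, fun t ht v hv => ?_⟩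
  have hcone := hle (a + t⁻¹ • v) hv
  simp only [Pi.neg_apply, add_sub_cancel_left, norm_smul,
    Real.norm_of_nonneg (inv_nonneg.2 ht.le)] at hcone
  rw [U_smul_add_sub ht]
  calc _ ≤ t⁻¹ * (C * (t⁻¹ * ‖v‖)) := by gcongr; linarith
    _ = C * ‖v‖ / t ^ 2 := by ring

end Potential

section MassForm

variable {m : Fin N → ℝ}

/-- The mass inner product as a continuous bilinear form. -/
def massInner (m : Fin N → ℝ) : Conf d N →L[ℝ] Conf d N →L[ℝ] ℝ :=
  ∑ i, m i • (innerSL ℝ : EuclideanSpace ℝ (Fin d) →L[ℝ] _).bilinearComp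
    (ContinuousLinearMap.proj i) (ContinuousLinearMap.proj i)

lemma massInner_apply (x y : Conf d N) : massInner m x y = minner m x y := by
  simp [massInner, minner]

lemma minner_comm (x y : Conf d N) : minner m x y = minner m y x := by
  simp only [minner, real_inner_comm]

lemma minner_self_nonneg (hm : ∀ i, 0 ≤ m i) (x : Conf d N) : 0 ≤ minner m x x :=
  Finset.sum_nonneg fun i _ => mul_nonneg (hm i) real_inner_self_nonneg

lemma mnorm_sq (hm : ∀ i, 0 ≤ m i) (x : Conf d N) : mnorm m x ^ 2 = minner m x x :=
  Real.sq_sqrt (minner_self_nonneg hm x)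

lemma exists_norm_sq_le_minner (hm : ∀ i, 0 < m i) :
    ∃ C, 0 ≤ C ∧ ∀ x : Conf d N, ‖x‖ ^ 2 ≤ C * minner m x x := by
  have hC : 0 ≤ ∑ i, (m i)⁻¹ := Finset.sum_nonneg fun i _ => (inv_pos.2 (hm i)).le
  refine ⟨∑ i, (m i)⁻¹, hC, fun x => ?_⟩
  have hterm : ∀ i, 0 ≤ m i * ⟪x i, x i⟫ := fun i =>
    mul_nonneg (hm i).le real_inner_self_nonneg
  suffices ‖x‖ ≤ √((∑ i, (m i)⁻¹) * minner m x x) from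
    (Real.le_sqrt (norm_nonneg x)
      (mul_nonneg hC (minner_self_nonneg (fun i => (hm i).le) x))).1 this
  refine (pi_norm_le_iff_of_nonneg (Real.sqrt_nonneg _)).2 fun i => Real.le_sqrt_of_sq_le ?_
  calc ‖x i‖ ^ 2 = (m i)⁻¹ * (m i * ⟪x i, x i⟫) := by
        rw [real_inner_self_eq_norm_sq, inv_mul_cancel_left₀ (hm i).ne']
    _ ≤ (∑ i, (m i)⁻¹) * minner m x x :=
        mul_le_mul
          (Finset.single_le_sum (f := fun i => (m i)⁻¹) (fun j _ => (inv_pos.2 (hm j)).le)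
            (Finset.mem_univ i))
          (Finset.single_le_sum (f := fun i => m i * ⟪x i, x i⟫) (fun j _ => hterm j)
            (Finset.mem_univ i)) (hterm i) hC

/-- The quadratic part `∫ ⟨φ̇, ψ̇⟩_M` of the action, in terms of the velocities. -/
def massForm (m : Fin N → ℝ) : Hsp d N →L[ℝ] Hsp d N →L[ℝ] ℝ :=
  (massInner m).lpPairing halfLine 2 2

lemma massForm_apply (f g : Hsp d N) : massForm m f g = ∫ t, minner m (f t) (g t) ∂halfLine := by
  simp only [massForm, ContinuousLinearMap.lpPairing_eq_integral, massInner_apply]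

lemma massForm_comm (f g : Hsp d N) : massForm m f g = massForm m g f := by
  simp only [massForm_apply, minner_comm]

lemma integrable_minner (f g : Hsp d N) : Integrable (fun t => minner m (f t) (g t)) halfLine := by
  simpa only [massInner_apply] using
    (L1.integrable_coeFn _).congr ((massInner m).coeFn_holder (r := 1) f g)

lemma massForm_self_nonneg (hm : ∀ i, 0 ≤ m i) (f : Hsp d N) : 0 ≤ massForm m f f := by
  rw [massForm_apply]
  exact integral_nonneg fun t => minner_self_nonneg hm (f t)

lemma Lp_norm_sq_eq_integral {α E : Type*} [MeasurableSpace α] {μ : Measure α}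
    [NormedAddCommGroup E] (f : Lp E 2 μ) : ‖f‖ ^ 2 = ∫ t, ‖f t‖ ^ 2 ∂μ := by
  rw [Lp.norm_def, (Lp.memLp f).eLpNorm_eq_integral_rpow_norm two_ne_zero (by norm_num),
    ENNReal.toReal_ofReal (by positivity), ← Real.rpow_natCast, ← Real.rpow_mul (by positivity)]
  norm_num

lemma exists_norm_sq_le_massForm (hm : ∀ i, 0 < m i) :
    ∃ C, 0 ≤ C ∧ ∀ f : Hsp d N, ‖f‖ ^ 2 ≤ C * massForm m f f := by
  obtain ⟨C, hC, hle⟩ := exists_norm_sq_le_minner (d := d) hm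
  refine ⟨C, hC, fun f => ?_⟩
  rw [Lp_norm_sq_eq_integral, massForm_apply, ← integral_const_mul]
  exact integral_mono ((memLp_two_iff_integrable_sq_norm (Lp.memLp f).1).1 (Lp.memLp f))
    ((integrable_minner f f).const_mul C)
    fun t => hle (f t)

lemma tendsto_of_tendsto_massForm (hm : ∀ i, 0 < m i) {ι : Type*} {l : Filter ι}
    {u : ι → Hsp d N} {v : Hsp d N} (hweak : Tendsto (fun n => massForm m v (u n)) l
      (𝓝 (massForm m v v)))
    (hself : Tendsto (fun n => massForm m (u n) (u n)) l (𝓝 (massForm m v v))) :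
    Tendsto u l (𝓝 v) := by
  obtain ⟨C, -, hle⟩ := exists_norm_sq_le_massForm (d := d) hm
  have hexpand : ∀ n, massForm m (u n - v) (u n - v)
      = massForm m (u n) (u n) - 2 * massForm m v (u n) + massForm m v v := fun n => by
    simp only [map_sub, sub_apply, massForm_comm (u n) v]
    ring
  have hdiff : Tendsto (fun n => C * massForm m (u n - v) (u n - v)) l (𝓝 0) := by
    simp only [hexpand]
    convert ((hself.sub (hweak.const_mul 2)).add_const (massForm m v v)).const_mul C using 2
    ring_nf
  have hsq : Tendsto (fun n => ‖u n - v‖ ^ 2) l (𝓝 0) :=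
    squeeze_zero (fun _ => sq_nonneg _) (fun n => hle (u n - v)) hdiff
  refine tendsto_iff_norm_sub_tendsto_zero.2 ?_
  simpa [Function.comp_def] using (Real.continuous_sqrt.tendsto 0).comp hsq

end MassForm

section Center

variable {m : Fin N → ℝ}

/-- The projection of a configuration onto the zero-barycenter space. -/
def center (m : Fin N → ℝ) : Conf d N →L[ℝ] Conf d N :=
  ContinuousLinearMap.id ℝ _ -
    ContinuousLinearMap.pi fun _ => (∑ j, m j)⁻¹ • ∑ j, m j • ContinuousLinearMap.proj j

lemma center_apply (x : Conf d N) (i : Fin N) :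
    center m x i = x i - (∑ j, m j)⁻¹ • ∑ j, m j • x j := by
  simp [center]

lemma isClosed_setOf_inX : IsClosed {x : Conf d N | inX m x} :=
  isClosed_eq (by fun_prop) continuous_const

lemma inX_center (hm : ∀ i, 0 < m i) (x : Conf d N) : inX m (center m x) := by
  rcases isEmpty_or_nonempty (Fin N) with hN | hN
  · simp [inX]
  have hM : ∑ i, m i ≠ 0 := (Finset.sum_pos (fun i _ => hm i) Finset.univ_nonempty).ne'
  simp only [inX, center_apply, smul_sub, Finset.sum_sub_distrib, ← Finset.sum_smul]
  rw [smul_inv_smul₀ hM, sub_self]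

lemma center_sub_center (x : Conf d N) (i j : Fin N) :
    center m x i - center m x j = x i - x j := by
  rw [center_apply, center_apply, sub_sub_sub_cancel_right]

lemma U_congr_of_sub_eq {p q : Conf d N} (h : ∀ i j, p i - p j = q i - q j) : U m p = U m q := by
  simp only [U, h]

lemma collision_congr_of_sub_eq {p q : Conf d N} (h : ∀ i j, p i - p j = q i - q j) :
    collision p ↔ collision q := by
  simp only [collision, ← sub_eq_zero (b := p _), ← sub_eq_zero (b := q _), h]

/-- Pythagoras: a common translation is orthogonal to the zero-barycenter space. -/
lemma minner_center_le (hm : ∀ i, 0 < m i) (x : Conf d N) :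
    minner m (center m x) (center m x) ≤ minner m x x := by
  obtain ⟨b, hb⟩ : ∃ b, b = (∑ j, m j)⁻¹ • ∑ j, m j • x j := ⟨_, rfl⟩
  have hterm : ∀ i, m i * ⟪x i, x i⟫
      = m i * ⟪center m x i, center m x i⟫ + 2 * ⟪m i • center m x i, b⟫ + m i * ⟪b, b⟫ :=
    fun i => by
      have hx : x i = center m x i + b := by rw [center_apply, ← hb, sub_add_cancel]
      conv_lhs => rw [hx]
      rw [real_inner_add_add_self, real_inner_smul_left (center m x i)]
      ring
  have hcross : ∑ i, ⟪m i • center m x i, b⟫ = 0 := by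
    rw [← sum_inner, inX_center hm x, inner_zero_left]
  have hnn : 0 ≤ ∑ i, m i * ⟪b, b⟫ :=
    Finset.sum_nonneg fun i _ => mul_nonneg (hm i).le real_inner_self_nonneg
  calc minner m (center m x) (center m x)
      ≤ minner m (center m x) (center m x) + 2 * 0 + ∑ i, m i * ⟪b, b⟫ := by linarith
    _ = minner m x x := by
      rw [← hcross, Finset.mul_sum, minner, ← Finset.sum_add_distrib, ← Finset.sum_add_distrib]
      exact Finset.sum_congr rfl fun i _ => (hterm i).symm

lemma massForm_center_le (hm : ∀ i, 0 < m i) (f : Hsp d N) :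
    massForm m ((center m).compLpL 2 halfLine f) ((center m).compLpL 2 halfLine f)
      ≤ massForm m f f := by
  rw [massForm_apply, massForm_apply]
  refine integral_mono_ae (integrable_minner _ _) (integrable_minner _ _) ?_
  filter_upwards [(center m).coeFn_compLpL f] with t ht
  rw [ht]
  exact minner_center_le hm (f t)

end Center

section Motion

variable {m : Fin N → ℝ} {a x : Conf d N} {f g : Hsp d N} {t : ℝ}

/-- The motion `γ(t) = a t + φ(t) + x - a` of the curve `φ` with velocity `f`. -/
def motion (a x : Conf d N) (f : Hsp d N) : ℝ → Conf d N := hypCurve a x fun t => prim t f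

lemma motion_eq (a x : Conf d N) (f : Hsp d N) (t : ℝ) :
    motion a x f t = t • a + (prim t f + (x - a)) := by
  rw [motion, hypCurve]
  abel

lemma continuousOn_motion (a x : Conf d N) (f : Hsp d N) :
    ContinuousOn (motion a x f) (Set.Ici 1) := by
  have hprim : ContinuousOn (fun t => prim t f) (Set.Ici 1) :=
    continuousOn_prim.clm_apply continuousOn_const
  simp only [funext (motion_eq a x f)]
  fun_prop

lemma hasFDerivAt_motion (a x : Conf d N) (f : Hsp d N) (t : ℝ) :
    HasFDerivAt (fun f => motion a x f t) (prim t) f := by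
  simp only [motion_eq]
  exact ((prim (E := Conf d N) t).hasFDerivAt.add_const _).const_add _

lemma norm_prim_add_le (ht : 1 ≤ t) (f : Hsp d N) (v : Conf d N) :
    ‖prim t f + v‖ ≤ √t * (‖f‖ + ‖v‖) := by
  have hv : ‖v‖ ≤ √t * ‖v‖ := le_mul_of_one_le_left (norm_nonneg v) (Real.one_le_sqrt.2 ht)
  rw [mul_add]
  exact (norm_add_le _ _).trans (add_le_add (norm_prim_apply_le ht f) hv)

lemma tendsto_inv_smul_motion (a x : Conf d N) (f : Hsp d N) :
    Tendsto (fun t => t⁻¹ • motion a x f t) atTop (𝓝 a) := by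
  have hsmall : Tendsto (fun t : ℝ => t⁻¹ • (prim t f + (x - a))) atTop (𝓝 0) := by
    have hbound : Tendsto (fun t => (√t)⁻¹ * (‖f‖ + ‖x - a‖)) atTop (𝓝 0) := by
      simpa using (tendsto_inv_atTop_zero.comp tendsto_sqrt_atTop).mul_const (‖f‖ + ‖x - a‖)
    refine squeeze_zero_norm' ?_ hbound
    filter_upwards [eventually_ge_atTop 1] with t ht
    rw [norm_smul, norm_inv, Real.norm_of_nonneg (by linarith), ← Real.sqrt_div_self,
      div_eq_inv_mul, mul_assoc]
    gcongr
    exact norm_prim_add_le ht f (x - a)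
  have hadd := hsmall.const_add a
  rw [add_zero] at hadd
  refine hadd.congr' ?_
  filter_upwards [eventually_ne_atTop 0] with t ht
  rw [motion_eq, smul_add t⁻¹ (t • a), inv_smul_smul₀ ht]

/-- The motion with velocity `a + f` has no collision at times `t ≥ 1`. -/
def CollisionFree (a x : Conf d N) (f : Hsp d N) : Prop :=
  ∀ t, 1 ≤ t → ¬ collision (motion a x f t)

lemma CollisionFree.ae_not_collision (hf : CollisionFree a x f) :
    ∀ᵐ t ∂halfLine, ¬ collision (motion a x f t) := by
  filter_upwards [ae_restrict_mem measurableSet_Ioi] with t ht using hf t ht.le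

lemma norm_inv_smul_motion_sub_le (ht : 1 ≤ t) (f g : Hsp d N) :
    ‖t⁻¹ • motion a x g t - t⁻¹ • motion a x f t‖ ≤ ‖g - f‖ := by
  have ht0 : 0 < t := one_pos.trans_le ht
  have hdiff : motion a x g t - motion a x f t = prim t (g - f) := by
    rw [motion_eq, motion_eq, map_sub]
    abel
  calc _ = t⁻¹ * ‖prim t (g - f)‖ := by
        rw [← smul_sub, hdiff, norm_smul, Real.norm_of_nonneg (by positivity)]
    _ ≤ t⁻¹ * (t * ‖g - f‖) := by
        gcongr
        refine (norm_prim_apply_le ht _).trans ?_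
        gcongr
        exact (Real.sqrt_le_left ht0.le).2 (by nlinarith)
    _ = ‖g - f‖ := inv_mul_cancel_left₀ ht0.ne' _

lemma CollisionFree.exists_isCompact (ha : ¬ collision a) (hf : CollisionFree a x f) :
    ∃ δ > 0, ∃ K : Set (Conf d N), IsCompact K ∧ K ⊆ {q | ¬ collision q} ∧
      ∀ g ∈ Metric.closedBall f δ, ∀ t, 1 ≤ t → t⁻¹ • motion a x g t ∈ K := by
  set c : Set.Ici (1:ℝ) → Conf d N := fun t => (t:ℝ)⁻¹ • motion a x f t
  have hcont : Continuous c := by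
    have hmotion := continuousOn_iff_continuous_domRestrict.1 (continuousOn_motion a x f)
    refine Continuous.smul (Continuous.inv₀ continuous_subtype_val fun t => ?_) hmotion
    exact (one_pos.trans_le t.2).ne'
  have htime : Tendsto ((↑) : Set.Ici (1:ℝ) → ℝ) (cocompact _) atTop :=
    (tendsto_norm_cocompact_atTop.comp isClosed_Ici.isClosedEmbedding_subtypeVal.tendsto_cocompact)
      |>.congr fun t => Real.norm_of_nonneg (zero_le_one.trans t.2)
  have hK₀ := ((tendsto_inv_smul_motion a x f).comp htime).isCompact_insert_range_of_cocompact hcont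
  have hK₀c : insert a (range c) ⊆ {q | ¬ collision q} := by
    refine insert_subset ha (range_subset_iff.2 fun t => ?_)
    have ht : (t:ℝ)⁻¹ ≠ 0 := inv_ne_zero (one_pos.trans_le t.2).ne'
    exact (collision_smul_iff ht).not.2 (hf t t.2)
  obtain ⟨δ, hδ, hsub⟩ := hK₀.exists_cthickening_subset_open isOpen_setOf_not_collision hK₀c
  refine ⟨δ, hδ, _, hK₀.cthickening, hsub, fun g hg t ht => ?_⟩
  refine Metric.mem_cthickening_of_dist_le _ (c ⟨t, ht⟩) _ _ (mem_insert_of_mem _ ⟨_, rfl⟩) ?_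
  rw [dist_eq_norm]
  exact (norm_inv_smul_motion_sub_le ht f g).trans (mem_closedBall_iff_norm.1 hg)

lemma CollisionFree.eventually (ha : ¬ collision a) (hf : CollisionFree a x f) :
    ∀ᶠ g in 𝓝 f, CollisionFree a x g := by
  obtain ⟨δ, hδ, K, -, hKc, hmem⟩ := hf.exists_isCompact ha
  filter_upwards [Metric.closedBall_mem_nhds f hδ] with g hg t ht
  have ht' : t⁻¹ ≠ 0 := inv_ne_zero (one_pos.trans_le ht).ne'
  exact (collision_smul_iff ht').not.1 (hKc (hmem g hg t ht))

end Motion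

section Action

variable {m : Fin N → ℝ} {a x : Conf d N} {f g : Hsp d N}

/-- The renormalized potential `U(γ(t)) - U(a t)` along the motion with velocity `a + f`. -/
def renPot (m : Fin N → ℝ) (a x : Conf d N) (f : Hsp d N) (t : ℝ) : ℝ :=
  U m (motion a x f t) - U m (t • a)

/-- The renormalized action as a function of the velocity; see `FiniteAction` for the velocities
at which it is meaningful. -/
def action (m : Fin N → ℝ) (a x : Conf d N) (f : Hsp d N) : ℝ :=
  1 / 2 * massForm m f f + ∫ t, renPot m a x f t ∂halfLine

/-- The condition for the extended-real action `hypAction` to be finite at the curve with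
velocity `f`. -/
def FiniteAction (m : Fin N → ℝ) (a x : Conf d N) (f : Hsp d N) : Prop :=
  Integrable (renPot m a x f) halfLine ∧ ∀ᵐ t ∂halfLine, ¬ collision (motion a x f t)

lemma aestronglyMeasurable_renPot : AEStronglyMeasurable (renPot m a x f) halfLine := by
  have hmotion : AEMeasurable (motion a x f) halfLine :=
    ((continuousOn_motion a x f).mono Ioi_subset_Ici_self).aemeasurable measurableSet_Ioi
  exact ((measurable_U.comp_aemeasurable hmotion).sub
    (measurable_U.comp (by fun_prop)).aemeasurable).aestronglyMeasurable

lemma exists_le_renPot (hm : ∀ i, 0 ≤ m i) (ha : ¬ collision a) (x : Conf d N) :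
    ∃ C, 0 ≤ C ∧ ∀ f t, 1 ≤ t → -(C * (‖f‖ + ‖x - a‖)) * decay t ≤ renPot m a x f t := by
  obtain ⟨C, hC, hle⟩ := exists_le_U_sub hm ha
  refine ⟨C, hC, fun f t ht => ?_⟩
  rw [renPot, motion_eq]
  refine le_trans ?_ (hle t (one_pos.trans_le ht) _)
  calc -(C * (‖f‖ + ‖x - a‖)) * decay t = -(C * (√t * (‖f‖ + ‖x - a‖)) / t ^ 2) := by
        rw [decay]
        ring
    _ ≤ _ := by
        gcongr
        exact norm_prim_add_le ht f (x - a)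

lemma CollisionFree.exists_renPot_le (ha : ¬ collision a) (hf : CollisionFree a x f) :
    ∃ C, ∀ t, 1 ≤ t → renPot m a x f t ≤ C * decay t := by
  obtain ⟨δ, hδ, K, hK, hKc, hmem⟩ := hf.exists_isCompact ha
  obtain ⟨C, hC, hle⟩ := exists_U_sub_le (m := m) ha hK hKc
  refine ⟨C * (‖f‖ + ‖x - a‖), fun t ht => ?_⟩
  have ht0 : 0 < t := one_pos.trans_le ht
  have hmemt : a + t⁻¹ • (prim t f + (x - a)) ∈ K := by
    have hft := hmem f (Metric.mem_closedBall_self hδ.le) t ht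
    rwa [motion_eq, smul_add t⁻¹ (t • a), inv_smul_smul₀ ht0.ne'] at hft
  rw [renPot, motion_eq]
  refine (hle t ht0 _ hmemt).trans ?_
  calc _ ≤ C * (√t * (‖f‖ + ‖x - a‖)) / t ^ 2 := by
        gcongr
        exact norm_prim_add_le ht f (x - a)
    _ = C * (‖f‖ + ‖x - a‖) * decay t := by
        rw [decay]
        ring

lemma CollisionFree.finiteAction (hm : ∀ i, 0 ≤ m i) (ha : ¬ collision a)
    (hf : CollisionFree a x f) : FiniteAction m a x f := by
  refine ⟨?_, hf.ae_not_collision⟩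
  obtain ⟨C₁, -, hlower⟩ := exists_le_renPot hm ha x
  obtain ⟨C₂, hupper⟩ := hf.exists_renPot_le (m := m) ha
  refine integrable_of_le_of_le aestronglyMeasurable_renPot ?_ ?_
    (integrable_decay.const_mul (-(C₁ * (‖f‖ + ‖x - a‖)))) (integrable_decay.const_mul C₂)
  · filter_upwards [ae_restrict_mem measurableSet_Ioi] with t ht using hlower f t ht.le
  · filter_upwards [ae_restrict_mem measurableSet_Ioi] with t ht using hupper t ht.le

end Action

section Reduction

variable {m : Fin N → ℝ} {a x : Conf d N} {f g : Hsp d N} {φ φ' : ℝ → Conf d N}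

lemma timeSet_one_top : timeSet 1 ⊤ = Set.Ioi (1:ℝ) := by
  ext t
  simp [timeSet, EReal.coe_lt_top]

lemma InD.memLp (hm : ∀ i, 0 < m i) (h : InD m 1 ⊤ φ φ') : MemLp φ' 2 halfLine := by
  obtain ⟨-, -, -, hloc, hsq⟩ := h
  have hmeas : AEStronglyMeasurable φ' halfLine := by
    have hunion : Set.Ioi (1:ℝ) = ⋃ n : ℕ, Set.Ioc (1:ℝ) (n + 1) :=
      (iUnion_Ioc_eq_Ioi_self_iff.2 fun t _ => (exists_nat_ge t).imp fun n hn => by linarith).symm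
    rw [halfLine, hunion, aestronglyMeasurable_iUnion_iff]
    exact fun n => (hloc _ (by simp) (EReal.coe_lt_top _)).1
  obtain ⟨C, -, hC⟩ := exists_norm_sq_le_minner (d := d) hm
  rw [timeSet_one_top] at hsq
  refine (memLp_two_iff_integrable_sq_norm hmeas).2 ((hsq.const_mul C).mono' ?_ ?_)
  · exact hmeas.norm.pow 2
  · filter_upwards with t
    rw [Real.norm_of_nonneg (by positivity), mnorm_sq fun i => (hm i).le]
    exact hC (φ' t)

lemma inD_prim (hm : ∀ i, 0 ≤ m i) (hf : ∀ t, 1 ≤ t → inX m (prim t f)) :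
    InD m 1 ⊤ (fun t => prim t f) f := by
  refine ⟨by simp [prim_one], fun t ht _ => hf t ht, fun t _ _ => prim_apply t f,
    fun t _ _ => integrableOn_Ioc_Lp f t, ?_⟩
  simpa only [timeSet_one_top, mnorm_sq hm, IntegrableOn] using integrable_minner f f

lemma hypAction_congr {ψ ψ' : ℝ → Conf d N} (h : ∀ t, 1 ≤ t → φ t = ψ t)
    (h' : φ' =ᵐ[halfLine] ψ') : hypAction m a x ⊤ φ φ' = hypAction m a x ⊤ ψ ψ' := by
  have hcurve : ∀ᵐ t ∂halfLine, hypCurve a x φ t = hypCurve a x ψ t := by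
    filter_upwards [ae_restrict_mem measurableSet_Ioi] with t ht
    rw [hypCurve, hypCurve, h t ht.le]
  have hintegrand : hypIntegrand m a x φ φ' =ᵐ[halfLine] hypIntegrand m a x ψ ψ' := by
    filter_upwards [hcurve, h'] with t ht ht'
    rw [hypIntegrand, hypIntegrand, ht, ht']
  have hcollision : (∀ᵐ t ∂halfLine, ¬ collision (hypCurve a x φ t))
      ↔ ∀ᵐ t ∂halfLine, ¬ collision (hypCurve a x ψ t) :=
    eventually_congr (hcurve.mono fun t ht => by rw [ht])
  simp only [hypAction, timeSet_one_top, IntegrableOn, integrable_congr hintegrand, hcollision,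
    integral_congr_ae hintegrand]

lemma InD.exists_velocity (hm : ∀ i, 0 < m i) (h : InD m 1 ⊤ φ φ') :
    ∃ f : Hsp d N, (∀ t, 1 ≤ t → φ t = prim t f) ∧
      hypAction m a x ⊤ φ φ' = hypAction m a x ⊤ (fun t => prim t f) f := by
  have hf := (h.memLp hm).coeFn_toLp
  have hprim : ∀ t, 1 ≤ t → φ t = prim t ((h.memLp hm).toLp φ') := fun t ht => by
    rw [h.2.2.1 t ht (EReal.coe_lt_top _), prim_apply]
    exact integral_congr_ae
      (ae_mono (Measure.restrict_mono Ioc_subset_Ioi_self le_rfl) hf.symm)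
  exact ⟨_, hprim, hypAction_congr hprim hf.symm⟩

lemma FiniteAction.hypAction_eq (hm : ∀ i, 0 ≤ m i) (hf : FiniteAction m a x f) :
    hypAction m a x ⊤ (fun t => prim t f) f = (action m a x f : ℝ) := by
  have hkin := (integrable_minner (m := m) f f).const_mul (1 / 2)
  have hsplit : hypIntegrand m a x (fun t => prim t f) f
      = fun t => 1 / 2 * minner m (f t) (f t) + renPot m a x f t := by
    ext t
    rw [hypIntegrand, mnorm_sq hm, renPot, motion]
    ring
  rw [hypAction, timeSet_one_top, hsplit, if_pos ⟨hkin.add hf.1, hf.2⟩, integral_add hkin hf.1,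
    integral_const_mul, action, massForm_apply]

/-- The velocities of the minimizers of the renormalized action. -/
def minimizers (m : Fin N → ℝ) (a x : Conf d N) : Set (Hsp d N) :=
  {f | InD m 1 ⊤ (fun t => prim t f) f ∧
    hypAction m a x ⊤ (fun t => prim t f) f = hypInf m a x ⊤}

lemma image_domRestrict_minimizers_subset (hm : ∀ i, 0 < m i) :
    (fun p : (ℝ → Conf d N) × (ℝ → Conf d N) => (Set.Ici (1:ℝ)).domRestrict p.1) ''
        {p | InD m 1 ⊤ p.1 p.2 ∧ hypAction m a x ⊤ p.1 p.2 = hypInf m a x ⊤}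
      ⊆ (fun f : Hsp d N => (Set.Ici (1:ℝ)).domRestrict fun t => prim t f) '' minimizers m a x := by
  rintro _ ⟨p, ⟨hp, hmin⟩, rfl⟩
  obtain ⟨f, hprim, haction⟩ := hp.exists_velocity (a := a) (x := x) hm
  refine ⟨f, ⟨inD_prim (fun i => (hm i).le) fun t ht => ?_, haction.symm.trans hmin⟩, ?_⟩
  · exact hprim t ht ▸ hp.2.1 t ht (EReal.coe_lt_top _)
  · exact funext fun t => (hprim t t.2).symm

lemma motion_center_sub (f : Hsp d N) (t : ℝ) (i j : Fin N) :
    motion a x ((center m).compLpL 2 halfLine f) t i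
        - motion a x ((center m).compLpL 2 halfLine f) t j
      = motion a x f t i - motion a x f t j := by
  simp only [motion_eq, prim_compLpL, Pi.add_apply, add_sub_add_comm, center_sub_center]

lemma renPot_center (f : Hsp d N) :
    renPot m a x ((center m).compLpL 2 halfLine f) = renPot m a x f := by
  ext t
  rw [renPot, renPot, U_congr_of_sub_eq (motion_center_sub f t)]

lemma FiniteAction.comp_center (hf : FiniteAction m a x f) :
    FiniteAction m a x ((center m).compLpL 2 halfLine f) := by
  refine ⟨by rw [renPot_center]; exact hf.1, hf.2.mono fun t ht => ?_⟩
  rwa [collision_congr_of_sub_eq (motion_center_sub f t)]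

/-- Projecting a competitor to zero barycenter does not increase its action, so that minimality in
`D₀^{1,2}` extends to all square-integrable velocities. -/
lemma FiniteAction.hypInf_le (hm : ∀ i, 0 < m i) (hf : FiniteAction m a x f) :
    hypInf m a x ⊤ ≤ (action m a x f : ℝ) := by
  have hm' : ∀ i, 0 ≤ m i := fun i => (hm i).le
  have hinD := inD_prim hm' (f := (center m).compLpL 2 halfLine f) fun t _ => by
    rw [prim_compLpL]
    exact inX_center hm _
  calc hypInf m a x ⊤ ≤ _ := iInf_le_of_le _ (iInf_le_of_le _ (iInf_le _ hinD))
    _ = (action m a x ((center m).compLpL 2 halfLine f) : ℝ) := hf.comp_center.hypAction_eq hm'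
    _ ≤ (action m a x f : ℝ) := by
      rw [EReal.coe_le_coe_iff, action, action, renPot_center]
      gcongr
      exact massForm_center_le hm f

lemma action_le_of_mem_minimizers (hm : ∀ i, 0 < m i) (hf : f ∈ minimizers m a x)
    (hfin : FiniteAction m a x f) (hg : FiniteAction m a x g) :
    action m a x f ≤ action m a x g := by
  rw [← EReal.coe_le_coe_iff, ← hfin.hypAction_eq fun i => (hm i).le, hf.2]
  exact hg.hypInf_le hm

end Reduction

section Derivative

-- The norm on `E →L[ℝ] F →L[ℝ] ℝ` is not synthesized at the default depth.
set_option maxSynthPendingDepth 3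

variable {m : Fin N → ℝ} {a x : Conf d N} {f g : Hsp d N} {t : ℝ}

/-- The derivative of `renPot m a x f t` with respect to `f`. -/
def renPotDeriv (m : Fin N → ℝ) (a x : Conf d N) (f : Hsp d N) (t : ℝ) : Hsp d N →L[ℝ] ℝ :=
  (fderiv ℝ (U m) (motion a x f t)).comp (prim t)

/-- The second derivative of `renPot m a x f t` with respect to `f`. -/
def renPotHess (m : Fin N → ℝ) (a x : Conf d N) (f : Hsp d N) (t : ℝ) :
    Hsp d N →L[ℝ] Hsp d N →L[ℝ] ℝ :=
  ((ContinuousLinearMap.compL ℝ (Hsp d N) (Conf d N) ℝ).flip (prim t)).comp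
    ((fderiv ℝ (fderiv ℝ (U m)) (motion a x f t)).comp (prim t))

lemma renPotHess_apply (f g h : Hsp d N) (t : ℝ) : renPotHess m a x f t g h
    = fderiv ℝ (fderiv ℝ (U m)) (motion a x f t) (prim t g) (prim t h) :=
  rfl

lemma hasFDerivAt_renPot (h : ¬ collision (motion a x f t)) :
    HasFDerivAt (fun f => renPot m a x f t) (renPotDeriv m a x f t) f :=
  ((hasFDerivAt_U h).comp f (hasFDerivAt_motion a x f t)).sub_const _

lemma hasFDerivAt_renPotDeriv (h : ¬ collision (motion a x f t)) :
    HasFDerivAt (fun f => renPotDeriv m a x f t) (renPotHess m a x f t) f :=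
  ((ContinuousLinearMap.compL ℝ (Hsp d N) (Conf d N) ℝ).flip (prim t)).hasFDerivAt.comp f
    ((hasFDerivAt_fderiv_U h).comp f (hasFDerivAt_motion a x f t))

lemma CollisionFree.aestronglyMeasurable_renPotDeriv (hf : CollisionFree a x f) :
    AEStronglyMeasurable (renPotDeriv m a x f) halfLine := by
  have hcont : ContinuousOn (renPotDeriv m a x f) (Set.Ici 1) :=
    (continuousOn_fderiv_U.comp (continuousOn_motion a x f) hf).clm_comp continuousOn_prim
  exact (hcont.mono Ioi_subset_Ici_self).aestronglyMeasurable measurableSet_Ioi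

lemma CollisionFree.aestronglyMeasurable_renPotHess (hf : CollisionFree a x f) :
    AEStronglyMeasurable (renPotHess m a x f) halfLine := by
  have hcont : ContinuousOn (renPotHess m a x f) (Set.Ici 1) :=
    ((ContinuousLinearMap.compL ℝ (Hsp d N) (Conf d N) ℝ).flip.continuous.comp_continuousOn
      continuousOn_prim).clm_comp
      ((continuousOn_fderiv_fderiv_U.comp (continuousOn_motion a x f) hf).clm_comp
        continuousOn_prim)
  exact (hcont.mono Ioi_subset_Ici_self).aestronglyMeasurable measurableSet_Ioi

lemma norm_renPotDeriv_le (ht : 1 ≤ t) {M : ℝ}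
    (hM : ‖fderiv ℝ (U m) (t⁻¹ • motion a x f t)‖ ≤ M) :
    ‖renPotDeriv m a x f t‖ ≤ M * decay t := by
  have ht0 : 0 < t := one_pos.trans_le ht
  have hM0 : 0 ≤ M := (norm_nonneg _).trans hM
  have hscale : motion a x f t = t • t⁻¹ • motion a x f t := (smul_inv_smul₀ ht0.ne' _).symm
  calc ‖renPotDeriv m a x f t‖
      ≤ ‖fderiv ℝ (U m) (motion a x f t)‖ * ‖(prim t : Hsp d N →L[ℝ] Conf d N)‖ :=
        ContinuousLinearMap.opNorm_comp_le _ _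
    _ ≤ ((t ^ 2)⁻¹ * M) * √t := by
        rw [hscale, fderiv_U_smul ht0, norm_smul, Real.norm_of_nonneg (by positivity)]
        gcongr
        exact norm_prim_le ht
    _ = M * decay t := by
        rw [decay]
        ring

lemma norm_renPotHess_le (ht : 1 ≤ t) {M : ℝ}
    (hM : ‖fderiv ℝ (fderiv ℝ (U m)) (t⁻¹ • motion a x f t)‖ ≤ M) :
    ‖renPotHess m a x f t‖ ≤ M * decay t := by
  have ht0 : 0 < t := one_pos.trans_le ht
  have hM0 : 0 ≤ M := (norm_nonneg _).trans hM
  have hscale : motion a x f t = t • t⁻¹ • motion a x f t := (smul_inv_smul₀ ht0.ne' _).symm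
  have hnorm : ‖fderiv ℝ (fderiv ℝ (U m)) (motion a x f t)‖ ≤ M / t ^ 3 := by
    rw [hscale, fderiv_fderiv_U_smul ht0, norm_smul, Real.norm_of_nonneg (by positivity),
      inv_mul_eq_div]
    gcongr
  refine (ContinuousLinearMap.opNorm_le_bound₂ _ (C := M * (√t ^ 2 / t ^ 3)) (by positivity)
    fun g h => ?_).trans (mul_le_mul_of_nonneg_left (sqrt_sq_div_cube_le_decay ht) hM0)
  calc ‖renPotHess m a x f t g h‖
      ≤ ‖fderiv ℝ (fderiv ℝ (U m)) (motion a x f t)‖ * ‖prim t g‖ * ‖prim t h‖ :=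
        (fderiv ℝ (fderiv ℝ (U m)) (motion a x f t)).le_opNorm₂ _ _
    _ ≤ (M / t ^ 3) * (√t * ‖g‖) * (√t * ‖h‖) := by
        gcongr
        · exact norm_prim_apply_le ht g
        · exact norm_prim_apply_le ht h
    _ = M * (√t ^ 2 / t ^ 3) * ‖g‖ * ‖h‖ := by ring

lemma CollisionFree.exists_eventually_norm_le (ha : ¬ collision a) (hf : CollisionFree a x f) :
    ∃ C, ∀ᶠ g in 𝓝 f, ∀ t, 1 ≤ t →
      ‖renPotDeriv m a x g t‖ ≤ C * decay t ∧ ‖renPotHess m a x g t‖ ≤ C * decay t := by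
  obtain ⟨δ, hδ, K, hK, hKc, hmem⟩ := hf.exists_isCompact ha
  obtain ⟨M₁, hM₁⟩ := hK.exists_bound_of_continuousOn (continuousOn_fderiv_U (m := m).mono hKc)
  obtain ⟨M₂, hM₂⟩ :=
    hK.exists_bound_of_continuousOn (continuousOn_fderiv_fderiv_U (m := m).mono hKc)
  refine ⟨max M₁ M₂, ?_⟩
  filter_upwards [Metric.closedBall_mem_nhds f hδ] with g hg
  refine fun t ht => ⟨norm_renPotDeriv_le ht ?_, norm_renPotHess_le ht ?_⟩
  · exact (hM₁ _ (hmem g hg t ht)).trans (le_max_left _ _)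
  · exact (hM₂ _ (hmem g hg t ht)).trans (le_max_right _ _)

/-- The differential of the action. -/
def actionDeriv (m : Fin N → ℝ) (a x : Conf d N) (f : Hsp d N) : Hsp d N →L[ℝ] ℝ :=
  massForm m f + ∫ t, renPotDeriv m a x f t ∂halfLine

/-- The second differential of the action. -/
def actionHess (m : Fin N → ℝ) (a x : Conf d N) (f : Hsp d N) : Hsp d N →L[ℝ] Hsp d N →L[ℝ] ℝ :=
  massForm m + ∫ t, renPotHess m a x f t ∂halfLine

lemma hasFDerivAt_half_massForm (f : Hsp d N) :
    HasFDerivAt (fun f => 1 / 2 * massForm m f f) (massForm m f) f := by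
  refine (((massForm m).hasFDerivAt_of_bilinear (hasFDerivAt_id f)
    (hasFDerivAt_id f)).const_mul (1 / 2)).congr_fderiv ?_
  ext g
  simp only [one_div, id_eq, ContinuousLinearMap.precompR_apply, ContinuousLinearMap.compL_apply,
    ContinuousLinearMap.comp_id, smul_add, add_apply, smul_apply, smul_eq_mul,
    ContinuousLinearMap.precompL_apply, ContinuousLinearMap.id_apply, massForm_comm g f]
  ring

lemma CollisionFree.integrable_renPotDeriv (ha : ¬ collision a) (hf : CollisionFree a x f) :
    Integrable (renPotDeriv m a x f) halfLine := by
  obtain ⟨C, hC⟩ := hf.exists_eventually_norm_le (m := m) ha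
  refine (integrable_decay.const_mul C).mono' hf.aestronglyMeasurable_renPotDeriv ?_
  filter_upwards [ae_restrict_mem measurableSet_Ioi] with t ht
    using (hC.self_of_nhds t (le_of_lt ht)).1

lemma CollisionFree.integrable_renPotHess (ha : ¬ collision a) (hf : CollisionFree a x f) :
    Integrable (renPotHess m a x f) halfLine := by
  obtain ⟨C, hC⟩ := hf.exists_eventually_norm_le (m := m) ha
  refine (integrable_decay.const_mul C).mono' hf.aestronglyMeasurable_renPotHess ?_
  filter_upwards [ae_restrict_mem measurableSet_Ioi] with t ht
    using (hC.self_of_nhds t (le_of_lt ht)).2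

lemma CollisionFree.hasFDerivAt_action (hm : ∀ i, 0 ≤ m i) (ha : ¬ collision a)
    (hf : CollisionFree a x f) : HasFDerivAt (action m a x) (actionDeriv m a x f) f := by
  obtain ⟨C, hC⟩ := hf.exists_eventually_norm_le (m := m) ha
  refine (hasFDerivAt_half_massForm f).add (hasFDerivAt_integral_of_dominated_of_fderiv_le
    ((hf.eventually ha).and hC)
    (Eventually.of_forall fun g => aestronglyMeasurable_renPot) (hf.finiteAction hm ha).1
    hf.aestronglyMeasurable_renPotDeriv ?_ (integrable_decay.const_mul C) ?_)
  · filter_upwards [ae_restrict_mem measurableSet_Ioi] with t ht g hg using (hg.2 t (le_of_lt ht)).1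
  · filter_upwards [ae_restrict_mem measurableSet_Ioi] with t ht g hg
      using hasFDerivAt_renPot (hg.1 t (le_of_lt ht))

lemma CollisionFree.hasFDerivAt_actionDeriv (ha : ¬ collision a) (hf : CollisionFree a x f) :
    HasFDerivAt (actionDeriv m a x) (actionHess m a x f) f := by
  obtain ⟨C, hC⟩ := hf.exists_eventually_norm_le (m := m) ha
  refine (massForm m).hasFDerivAt.add (hasFDerivAt_integral_of_dominated_of_fderiv_le
    ((hf.eventually ha).and hC)
    ((hf.eventually ha).mono fun g hg => hg.aestronglyMeasurable_renPotDeriv)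
    (hf.integrable_renPotDeriv ha) hf.aestronglyMeasurable_renPotHess ?_
    (integrable_decay.const_mul C) ?_)
  · filter_upwards [ae_restrict_mem measurableSet_Ioi] with t ht g hg using (hg.2 t (le_of_lt ht)).2
  · filter_upwards [ae_restrict_mem measurableSet_Ioi] with t ht g hg
      using hasFDerivAt_renPotDeriv (hg.1 t (le_of_lt ht))

lemma CollisionFree.secondVar_eq (ha : ¬ collision a) (hf : CollisionFree a x f)
    (g h : Hsp d N) : secondVar m (motion a x f) g h = actionHess m a x f g h := by
  have hint := hf.integrable_renPotHess (m := m) ha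
  have hint_apply : Integrable (fun t => renPotHess m a x f t g h) halfLine :=
    (hint.apply_continuousLinearMap g).apply_continuousLinearMap h
  rw [actionHess, add_apply, add_apply, massForm_apply, ContinuousLinearMap.integral_apply hint,
    ContinuousLinearMap.integral_apply (hint.apply_continuousLinearMap g),
    ← integral_add (integrable_minner g h) hint_apply, secondVar]
  refine setIntegral_congr_fun measurableSet_Ioi fun t ht => ?_
  simp only [renPotHess_apply, prim_apply, hessB_eq (hf t (le_of_lt ht))]

lemma CollisionFree.exists_antilipschitzWith_actionHess (ha : ¬ collision a)
    (hf : CollisionFree a x f) (hinv : FormInvertible m (motion a x f)) :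
    ∃ C, AntilipschitzWith C (actionHess m a x f) := by
  have hbij : Function.Bijective (actionHess m a x f) :=
    (Function.bijective_iff_existsUnique _).2 fun L => by
      simpa only [hf.secondVar_eq ha, ← ContinuousLinearMap.ext_iff] using hinv L
  exact ⟨_, (ContinuousLinearEquiv.ofBijective (actionHess m a x f)
    (LinearMap.ker_eq_bot.2 hbij.1) (LinearMap.range_eq_top.2 hbij.2)).antilipschitz⟩

end Derivative

section Compactness

variable {m : Fin N → ℝ} {a x : Conf d N} {f g v : Hsp d N} {u : ℕ → Hsp d N}

lemma exists_le_integral_renPot (hm : ∀ i, 0 ≤ m i) (ha : ¬ collision a) (x : Conf d N) :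
    ∃ C, 0 ≤ C ∧ ∀ f, FiniteAction m a x f →
      -(C * (‖f‖ + ‖x - a‖)) ≤ ∫ t, renPot m a x f t ∂halfLine := by
  obtain ⟨C, hC, hle⟩ := exists_le_renPot hm ha x
  refine ⟨C * ∫ t, decay t ∂halfLine, mul_nonneg hC (integral_nonneg decay_nonneg),
    fun f hf => ?_⟩
  calc _ = ∫ t, -(C * (‖f‖ + ‖x - a‖)) * decay t ∂halfLine := by
        rw [integral_const_mul]
        ring
    _ ≤ _ := by
        refine integral_mono_ae (integrable_decay.const_mul _) hf.1 ?_
        filter_upwards [ae_restrict_mem measurableSet_Ioi] with t ht using hle f t (le_of_lt ht)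

lemma exists_norm_le_of_action_le (hm : ∀ i, 0 < m i) (ha : ¬ collision a) (x : Conf d N)
    (A : ℝ) : ∃ R, ∀ f, FiniteAction m a x f → action m a x f ≤ A → ‖f‖ ≤ R := by
  obtain ⟨C₁, hC₁, hkin⟩ := exists_norm_sq_le_massForm (d := d) hm
  obtain ⟨C₂, hC₂, hpot⟩ := exists_le_integral_renPot (fun i => (hm i).le) ha x
  refine ⟨1 + 2 * C₁ * C₂ + 2 * C₁ * (|A| + C₂ * ‖x - a‖), fun f hf hfA => ?_⟩
  have hform : massForm m f f ≤ 2 * (|A| + C₂ * (‖f‖ + ‖x - a‖)) := by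
    rw [action] at hfA
    linarith [hpot f hf, le_abs_self A]
  have hquad : ‖f‖ ^ 2 ≤ 2 * C₁ * C₂ * ‖f‖ + 2 * C₁ * (|A| + C₂ * ‖x - a‖) := by
    linarith [hkin f, mul_le_mul_of_nonneg_left hform hC₁]
  have h₁ : 0 ≤ 2 * C₁ * C₂ := by positivity
  have h₂ : 0 ≤ 2 * C₁ * (|A| + C₂ * ‖x - a‖) := by positivity
  by_contra! hlt
  nlinarith [norm_nonneg f]

lemma tendsto_motion_of_weak
    (hweak : ∀ ℓ : Hsp d N →L[ℝ] ℝ, Tendsto (fun n => ℓ (u n)) atTop (𝓝 (ℓ v)))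
    (t : ℝ) : Tendsto (fun n => motion a x (u n) t) atTop (𝓝 (motion a x v t)) := by
  simp only [motion_eq]
  exact ((tendsto_clm_of_weak hweak (prim t)).add_const _).const_add _

lemma finiteAction_and_integral_le_of_weak (hm : ∀ i, 0 < m i) (ha : ¬ collision a)
    (hweak : ∀ ℓ : Hsp d N →L[ℝ] ℝ, Tendsto (fun n => ℓ (u n)) atTop (𝓝 (ℓ v)))
    {R L : ℝ} (hR : ∀ n, ‖u n‖ ≤ R) (hfin : ∀ n, FiniteAction m a x (u n))
    (hL : Tendsto (fun n => ∫ t, renPot m a x (u n) t ∂halfLine) atTop (𝓝 L)) :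
    FiniteAction m a x v ∧ ∫ t, renPot m a x v t ∂halfLine ≤ L := by
  obtain ⟨C, hC, hle⟩ := exists_le_renPot (fun i => (hm i).le) ha x
  have hlower : ∀ n, (fun t => -(C * (R + ‖x - a‖)) * decay t) ≤ᵐ[halfLine] renPot m a x (u n) := by
    intro n
    filter_upwards [ae_restrict_mem measurableSet_Ioi] with t ht
    refine (mul_le_mul_of_nonneg_right ?_ (decay_nonneg t)).trans (hle (u n) t (le_of_lt ht))
    gcongr
    exact hR n
  have hmotion := tendsto_motion_of_weak (a := a) (x := x) hweak
  have hcollision : ∀ᵐ t ∂halfLine, ¬ collision (motion a x v t) := by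
    filter_upwards [ae_all_iff.2 fun n => (hfin n).2, ae_not_tendsto_atTop_of_integral_tendsto
      (integrable_decay.const_mul _) (fun n => (hfin n).1) hlower hL] with t hfree hblowup hcol
    exact hblowup (tendsto_atTop_add_const_right _ _
      (tendsto_U_atTop_of_collision hm hcol (hmotion t) hfree))
  have hlim : ∀ᵐ t ∂halfLine,
      Tendsto (fun n => renPot m a x (u n) t) atTop (𝓝 (renPot m a x v t)) := by
    filter_upwards [hcollision] with t ht
    exact ((hasFDerivAt_U ht).continuousAt.tendsto.comp (hmotion t)).sub_const _
  obtain ⟨hint, hvL⟩ := integral_le_of_tendsto_ae_of_integral_tendsto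
    (integrable_decay.const_mul _) (fun n => (hfin n).1) hlower hL hlim
  exact ⟨⟨hint, hcollision⟩, hvL⟩

lemma inX_prim_of_weak
    (hweak : ∀ ℓ : Hsp d N →L[ℝ] ℝ, Tendsto (fun n => ℓ (u n)) atTop (𝓝 (ℓ v)))
    (hu : ∀ n, u n ∈ minimizers m a x) {t : ℝ} (ht : 1 ≤ t) : inX m (prim t v) :=
  isClosed_setOf_inX.mem_of_tendsto (tendsto_clm_of_weak hweak (prim t))
    (Eventually.of_forall fun n => (hu n).1.2.1 t ht (EReal.coe_lt_top _))

lemma mem_minimizers_of_action_le (hm : ∀ i, 0 < m i) (hg : g ∈ minimizers m a x)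
    (hgfin : FiniteAction m a x g) (hffin : FiniteAction m a x f)
    (hfX : ∀ t, 1 ≤ t → inX m (prim t f)) (hle : action m a x f ≤ action m a x g) :
    f ∈ minimizers m a x := by
  have hm' : ∀ i, 0 ≤ m i := fun i => (hm i).le
  refine ⟨inD_prim hm' hfX, ?_⟩
  rw [hffin.hypAction_eq hm']
  refine le_antisymm ?_ (hffin.hypInf_le hm)
  rw [← hg.2, hgfin.hypAction_eq hm']
  exact EReal.coe_le_coe hle

lemma massForm_le_of_weak (hm : ∀ i, 0 ≤ m i)
    (hweak : ∀ ℓ : Hsp d N →L[ℝ] ℝ, Tendsto (fun n => ℓ (u n)) atTop (𝓝 (ℓ v)))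
    {c : ℝ} (hc : Tendsto (fun n => massForm m (u n) (u n)) atTop (𝓝 c)) :
    massForm m v v ≤ c := by
  have hexpand : ∀ n, massForm m v (u n)
      ≤ (massForm m (u n) (u n) + massForm m v v) / 2 := fun n => by
    have hnonneg := massForm_self_nonneg hm (u n - v)
    simp only [map_sub, sub_apply, massForm_comm (u n) v] at hnonneg
    linarith
  linarith [le_of_tendsto_of_tendsto' (hweak (massForm m v))
    ((hc.add_const (massForm m v v)).div_const 2) hexpand]

/-- Passing to the weak limit can only decrease the kinetic and the potential part of the action; by
minimality neither decreases, and convergence of the kinetic parts upgrades weak to strong. -/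
lemma mem_minimizers_and_tendsto_of_weak (hm : ∀ i, 0 < m i) (ha : ¬ collision a)
    (hweak : ∀ ℓ : Hsp d N →L[ℝ] ℝ, Tendsto (fun n => ℓ (u n)) atTop (𝓝 (ℓ v)))
    {R c : ℝ} (hR : ∀ n, ‖u n‖ ≤ R) (hu : ∀ n, u n ∈ minimizers m a x)
    (hfin : ∀ n, FiniteAction m a x (u n))
    (hc : Tendsto (fun n => massForm m (u n) (u n)) atTop (𝓝 c)) :
    v ∈ minimizers m a x ∧ Tendsto u atTop (𝓝 v) := by
  have haction : ∀ n, action m a x (u n) = action m a x (u 0) := fun n =>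
    (action_le_of_mem_minimizers hm (hu n) (hfin n) (hfin 0)).antisymm
      (action_le_of_mem_minimizers hm (hu 0) (hfin 0) (hfin n))
  have hpot : Tendsto (fun n => ∫ t, renPot m a x (u n) t ∂halfLine) atTop
      (𝓝 (action m a x (u 0) - 1 / 2 * c)) := by
    refine ((hc.const_mul (1 / 2)).const_sub (action m a x (u 0))).congr fun n => ?_
    rw [← haction n, action, add_sub_cancel_left]
  obtain ⟨hvfin, hvpot⟩ := finiteAction_and_integral_le_of_weak hm ha hweak hR hfin hpot
  have hvc := massForm_le_of_weak (fun i => (hm i).le) hweak hc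
  have hmin := action_le_of_mem_minimizers hm (hu 0) (hfin 0) hvfin
  have hv : action m a x v = 1 / 2 * massForm m v v + ∫ t, renPot m a x v t ∂halfLine := rfl
  have hcv : c = massForm m v v := by linarith
  refine ⟨mem_minimizers_of_action_le hm (hu 0) (hfin 0) hvfin
    (fun t ht => inX_prim_of_weak hweak hu ht) (by linarith), ?_⟩
  exact tendsto_of_tendsto_massForm hm (hweak (massForm m v)) (hcv ▸ hc)

lemma isCompact_minimizers (hm : ∀ i, 0 < m i) (ha : ¬ collision a)
    (hfin : ∀ f ∈ minimizers m a x, FiniteAction m a x f) : IsCompact (minimizers m a x) := by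
  refine IsSeqCompact.isCompact fun u hu => ?_
  obtain ⟨R, hR⟩ := exists_norm_le_of_action_le hm ha x (action m a x (u 0))
  have huR : ∀ n, ‖u n‖ ≤ R := fun n => hR _ (hfin _ (hu n))
    (action_le_of_mem_minimizers hm (hu n) (hfin _ (hu n)) (hfin _ (hu 0)))
  obtain ⟨v, σ, hσ, hweak⟩ := exists_weakly_convergent_subseq_Lp u huR
  have hmem : ∀ n, massForm m (u (σ n)) (u (σ n))
      ∈ Metric.closedBall 0 (‖massForm (d := d) m‖ * R * R) := fun n => by
    rw [mem_closedBall_zero_iff]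
    exact (massForm m).le_of_opNorm₂_le_of_le le_rfl (huR _) (huR _)
  obtain ⟨c, -, τ, hτ, hc⟩ := (isCompact_closedBall _ _).tendsto_subseq hmem
  obtain ⟨hv, hlim⟩ := mem_minimizers_and_tendsto_of_weak (u := u ∘ σ ∘ τ) hm ha
    (fun ℓ => (hweak ℓ).comp hτ.tendsto_atTop) (fun n => huR _) (fun n => hu _)
    (fun n => hfin _ (hu _)) hc
  exact ⟨v, hv, σ ∘ τ, hσ.comp hτ, hlim⟩

end Compactness

section Finiteness

variable {m : Fin N → ℝ} {a x : Conf d N} {f : Hsp d N}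

lemma actionDeriv_eq_zero_of_mem_minimizers (hm : ∀ i, 0 < m i) (ha : ¬ collision a)
    (hmin : f ∈ minimizers m a x) (hf : CollisionFree a x f) : actionDeriv m a x f = 0 := by
  have hm' : ∀ i, 0 ≤ m i := fun i => (hm i).le
  have hloc : IsLocalMin (action m a x) f := (hf.eventually ha).mono fun g hg =>
    action_le_of_mem_minimizers hm hmin (hf.finiteAction hm' ha) (hg.finiteAction hm' ha)
  exact hloc.hasFDerivAt_eq_zero (hf.hasFDerivAt_action hm' ha)

lemma CollisionFree.eventually_actionDeriv_ne_zero (ha : ¬ collision a) (hf : CollisionFree a x f)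
    (hinv : FormInvertible m (motion a x f)) : ∀ᶠ g in 𝓝[≠] f, actionDeriv m a x g ≠ 0 :=
  (hf.hasFDerivAt_actionDeriv ha).eventually_ne (hf.exists_antilipschitzWith_actionHess ha hinv)

lemma finite_minimizers (hm : ∀ i, 0 < m i) (ha : ¬ collision a)
    (hnondeg : ∀ f ∈ minimizers m a x,
      CollisionFree a x f ∧ FormInvertible m (motion a x f)) :
    (minimizers m a x).Finite := by
  have hcompact := isCompact_minimizers hm ha fun f hf =>
    (hnondeg f hf).1.finiteAction (fun i => (hm i).le) ha
  by_contra hinf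
  obtain ⟨f, hf, hacc⟩ :=
    Set.Infinite.exists_accPt_of_subset_isCompact hinf hcompact Subset.rfl
  obtain ⟨hfree, hinv⟩ := hnondeg f hf
  refine accPt_iff_frequently_nhdsNE.1 hacc ?_
  filter_upwards [hfree.eventually_actionDeriv_ne_zero ha hinv] with g hg hgmin
  exact hg (actionDeriv_eq_zero_of_mem_minimizers hm ha hgmin (hnondeg g hgmin).1)

end Finiteness

theorem minimizers_finite_at_nonconjugate_general
    (m : Fin N → ℝ) (hm : ∀ i, 0 < m i) (a x : Conf d N) (ha : ¬ collision a)
    (hnonconj : ∀ φ φ' : ℝ → Conf d N, InD m 1 ⊤ φ φ' →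
      hypAction m a x ⊤ φ φ' = hypInf m a x ⊤ →
        (∀ t : ℝ, 1 ≤ t → ¬ collision (hypCurve a x φ t)) ∧
        FormInvertible m (hypCurve a x φ)) :
    Set.Finite
      ((fun p : (ℝ → Conf d N) × (ℝ → Conf d N) => (Set.Ici (1:ℝ)).domRestrict p.1) ''
        {p | InD m 1 ⊤ p.1 p.2 ∧ hypAction m a x ⊤ p.1 p.2 = hypInf m a x ⊤}) :=
  ((finite_minimizers hm ha fun f hf => hnonconj _ f hf.1 hf.2).image _).subset
    (image_domRestrict_minimizers_subset hm)

/-- **Finiteness of the set of minimizers at non-conjugate points** : if `x ∈ Ω`, `A_x`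
admits a minimizer, and for every minimizer `φ` the motion `γ = a t + φ + x − a` stays in
`Ω` and `d²A_x(φ)` is invertible, then the set of minimizers of `A_x` (as functions on
`[1,∞)`) is finite. -/
theorem minimizers_finite_at_nonconjugate {d N : ℕ} (hd : 2 ≤ d) (hN : 2 ≤ N)
    (m : Fin N → ℝ) (hm : ∀ i, 0 < m i)
    (a : Conf d N) (ha : inOmega m a)
    (x : Conf d N) (hx : inOmega m x)
    (hexists : ∃ φ φ' : ℝ → Conf d N,
      InD m 1 ⊤ φ φ' ∧ hypAction m a x ⊤ φ φ' = hypInf m a x ⊤)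
    (hnonconj : ∀ φ φ' : ℝ → Conf d N, InD m 1 ⊤ φ φ' →
      hypAction m a x ⊤ φ φ' = hypInf m a x ⊤ →
        (∀ t : ℝ, 1 ≤ t → inOmega m (hypCurve a x φ t)) ∧
        FormInvertible m (hypCurve a x φ)) :
    Set.Finite
      ((fun p : (ℝ → Conf d N) × (ℝ → Conf d N) => (Set.Ici (1:ℝ)).restrict p.1) ''
        {p | InD m 1 ⊤ p.1 p.2 ∧ hypAction m a x ⊤ p.1 p.2 = hypInf m a x ⊤}) :=
  minimizers_finite_at_nonconjugate_general m hm a x ha.2 fun φ φ' hφ hmin =>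
    (hnonconj φ φ' hφ hmin).imp_left fun hΩ t ht => (hΩ t ht).2

end NBodyHJ
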